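/- For every τ ∈ (0,1) there exists ν₀ ∈ (0,1) such that for every ν ∈ (0, ν₀] there exists μ₀ > 0 such that for every μ ∈ (0, μ₀] there exists n₀ ∈ ℕ such that for every n ≥ n₀ the following holds: if G = (A ∪ B, E) is a bipartite robust (ν,τ)-expander on 2n vertices with minimum degree at least n/2, then for every μn-bounded system of conflicts F for E(G) there exists a perfect matching of G that is F-conflict-free. -/

import Mathlib

/-- The `ν`-robust neighbourhood of `X`: vertices with at least `ν n` neighbours in `X`. -/
def robustNbhd {V : Type*} (G : SimpleGraph V) (n : ℕ) (ν : ℝ) (X : Set V) : Set V :=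
  {v : V | ν * n ≤ ((G.neighborSet v ∩ X).ncard : ℝ)}

/-- Bipartite robust `(ν,τ)`-expander. -/
def BipRobustExpander {V : Type*} (G : SimpleGraph V) (A B : Set V) (n : ℕ)
    (ν τ : ℝ) : Prop :=
  ∀ X : Set V, (X ⊆ A ∨ X ⊆ B) → τ * n ≤ (X.ncard : ℝ) → (X.ncard : ℝ) ≤ (1 - τ) * n →
    (X.ncard : ℝ) + ν * n ≤ ((robustNbhd G n ν X).ncard : ℝ)


section LLL
open Classical in
/-- Good outcomes: those in `Ω₀` avoiding every bad event indexed by `S`. -/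
noncomputable def cfGood {Ω ι : Type*} (Ω₀ : Finset Ω) (B : ι → Ω → Prop) (S : Finset ι) :
    Finset Ω := Ω₀.filter (fun w => ∀ c ∈ S, ¬ B c w)

open Classical in
theorem cf_lll {Ω ι : Type*} (Ω₀ : Finset Ω) (B : ι → Ω → Prop) (Γ : ι → Finset ι)
    (p D : ℝ) (hp : 0 ≤ p) (hD : 1 ≤ D) (hpD : 4 * p * D ≤ 1) (hne : Ω₀.Nonempty)
    (hΓ : ∀ c, ((Γ c).card : ℝ) ≤ D)
    (T : Finset ι)
    (hc : ∀ c ∈ T, ∀ S ⊆ T, Disjoint S (Γ c) →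
      (((cfGood Ω₀ B S).filter (B c)).card : ℝ) ≤ p * (cfGood Ω₀ B S).card) :
    (cfGood Ω₀ B T).Nonempty := by
  have hp4 : 4 * p ≤ 1 := by nlinarith
  have key : ∀ k : ℕ, ∀ S ⊆ T, S.card = k → (cfGood Ω₀ B S).Nonempty ∧
      ∀ c ∈ T, (((cfGood Ω₀ B S).filter (B c)).card : ℝ) ≤ 2 * p * (cfGood Ω₀ B S).card := by
    intro k
    induction k using Nat.strong_induction_on with
    | _ k ih =>
      intro S hST hSk
      have hnon : (cfGood Ω₀ B S).Nonempty := by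
        rcases S.eq_empty_or_nonempty with rfl | ⟨c, hcS⟩
        · simpa [cfGood] using hne
        · obtain ⟨h1, h2⟩ := ih (S.erase c).card (by
            rw [← hSk]; exact Finset.card_erase_lt_of_mem hcS) (S.erase c)
            ((Finset.erase_subset _ _).trans hST) rfl
          have h3 := h2 c (hST hcS)
          by_contra hemp
          have hsub : cfGood Ω₀ B (S.erase c) ⊆ (cfGood Ω₀ B (S.erase c)).filter (B c) := by
            intro w hw
            by_contra hcon
            apply hemp
            refine ⟨w, ?_⟩
            simp only [cfGood, Finset.mem_filter, Finset.mem_erase] at hw hcon ⊢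
            refine ⟨hw.1, fun c' hc' => ?_⟩
            by_cases hcc : c' = c
            · subst hcc; intro hb; exact hcon ⟨hw, hb⟩
            · exact hw.2 c' ⟨hcc, hc'⟩
          have h4 : ((cfGood Ω₀ B (S.erase c)).card : ℝ) ≤
              ((cfGood Ω₀ B (S.erase c)).filter (B c)).card := by
            exact_mod_cast Finset.card_le_card hsub
          have h5 : (0:ℝ) < (cfGood Ω₀ B (S.erase c)).card := by
            exact_mod_cast h1.card_pos
          nlinarith
      refine ⟨hnon, fun c hcT => ?_⟩
      set S1 := S.filter (fun x => x ∈ Γ c)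
      set S2 := S.filter (fun x => x ∉ Γ c)
      have hdis : Disjoint S2 (Γ c) := by
        rw [Finset.disjoint_left]; intro x hx; exact (Finset.mem_filter.1 hx).2
      have hS2T : S2 ⊆ T := (Finset.filter_subset _ _).trans hST
      have hA := hc c hcT S2 hS2T hdis
      have hsub : (cfGood Ω₀ B S).filter (B c) ⊆ (cfGood Ω₀ B S2).filter (B c) := by
        intro w hw
        simp only [cfGood, Finset.mem_filter] at hw ⊢
        exact ⟨⟨hw.1.1, fun c' hc' => hw.1.2 c' (Finset.mem_filter.1 hc').1⟩, hw.2⟩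
      have hB : (((cfGood Ω₀ B S).filter (B c)).card : ℝ) ≤
          ((cfGood Ω₀ B S2).filter (B c)).card := by exact_mod_cast Finset.card_le_card hsub
      suffices hh : ((cfGood Ω₀ B S2).card : ℝ) ≤ 2 * (cfGood Ω₀ B S).card by nlinarith
      rcases S1.eq_empty_or_nonempty with h1 | ⟨c1, hc1⟩
      · have : S2 = S := by
          apply Finset.filter_true_of_mem
          intro x hx hxx
          have : x ∈ S1 := Finset.mem_filter.2 ⟨hx, hxx⟩
          simp [h1] at this
        rw [this]
        have : (0:ℝ) ≤ (cfGood Ω₀ B S).card := by positivity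
        linarith
      · have hlt : S2.card < k := by
          rw [← hSk]
          apply Finset.card_lt_card
          refine ⟨Finset.filter_subset _ _, fun h => ?_⟩
          have h1 := Finset.mem_filter.1 hc1
          exact (Finset.mem_filter.1 (h h1.1)).2 h1.2
        obtain ⟨-, h2⟩ := ih _ hlt S2 hS2T rfl
        have hcov : cfGood Ω₀ B S2 ⊆ cfGood Ω₀ B S ∪
            S1.biUnion (fun c' => (cfGood Ω₀ B S2).filter (B c')) := by
          intro w hw
          by_cases hg : ∃ c' ∈ S1, B c' w
          · obtain ⟨c', h, h'⟩ := hg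
            apply Finset.mem_union_right
            exact Finset.mem_biUnion.2 ⟨c', h, Finset.mem_filter.2 ⟨hw, h'⟩⟩
          · apply Finset.mem_union_left
            push Not at hg
            simp only [cfGood, Finset.mem_filter] at hw ⊢
            refine ⟨hw.1, fun c' hc' => ?_⟩
            by_cases hcc : c' ∈ Γ c
            · exact hg c' (Finset.mem_filter.2 ⟨hc', hcc⟩)
            · exact hw.2 c' (Finset.mem_filter.2 ⟨hc', hcc⟩)
        have h3 : ((cfGood Ω₀ B S2).card : ℝ) ≤ (cfGood Ω₀ B S).card +
            ∑ c' ∈ S1, (((cfGood Ω₀ B S2).filter (B c')).card : ℝ) := by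
          have := (Finset.card_le_card hcov).trans ((Finset.card_union_le _ _).trans
            (Nat.add_le_add_left Finset.card_biUnion_le _))
          exact_mod_cast this
        have h4 : ∑ c' ∈ S1, (((cfGood Ω₀ B S2).filter (B c')).card : ℝ) ≤
            S1.card * (2 * p * (cfGood Ω₀ B S2).card) := by
          rw [← nsmul_eq_mul]
          apply Finset.sum_le_card_nsmul
          intro x hx
          exact h2 x (hST (Finset.mem_filter.1 hx).1)
        have h5 : (S1.card : ℝ) ≤ D := by
          refine le_trans ?_ (hΓ c)
          exact_mod_cast Finset.card_le_card (fun x hx => (Finset.mem_filter.1 hx).2)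
        have h6 : (S1.card : ℝ) * (2 * p * (cfGood Ω₀ B S2).card) ≤
            D * (2 * p * (cfGood Ω₀ B S2).card) := by gcongr
        have h7 : (0:ℝ) ≤ (cfGood Ω₀ B S2).card := by positivity
        nlinarith
  exact (key T.card T subset_rfl rfl).1
end LLL

section Switch
open Classical in
/-- perfect matchings of `H` (as bijections) avoiding the conflicts in `S`,
with prescribed values on `D`. -/
noncomputable def cfFam {α β : Type*} [Fintype α] [Fintype β] (H : α → β → Prop)
    (S : Finset ((α × β) × (α × β))) (D : Finset α) (w : α → β) : Finset (α ≃ β) :=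
  Finset.univ.filter (fun σ => (∀ a, H a (σ a)) ∧
    (∀ c ∈ S, ¬ (σ c.1.1 = c.1.2 ∧ σ c.2.1 = c.2.2)) ∧ ∀ z ∈ D, σ z = w z)

open Classical in
theorem cf_switch {α β : Type*} [Fintype α] [Fintype β] (H : α → β → Prop)
    (S : Finset ((α × β) × (α × β))) (D : Finset α) (w : α → β) (hDc : D.card ≤ 1)
    (Fr : α × β → α × β → Prop) (N μ κ : ℝ) (hN : (Fintype.card α : ℝ) ≤ N)
    (hsym : ∀ e f, Fr e f → Fr f e)
    (hbd : ∀ e, ((Finset.univ.filter (fun f => Fr e f)).card : ℝ) ≤ μ * N)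
    (hS : ∀ c ∈ S, Fr c.1 c.2 ∧ c.1.1 ≠ c.2.1) (hκ : 0 < κ) (hμκ : μ ≤ κ / 4)
    (hμ : 0 ≤ μ)
    (hNκ : 20 / κ ≤ N) (a : α) (b : β) (haD : a ∉ D)
    (hav : ∀ c ∈ S, c.1.1 ≠ a ∧ c.1.2 ≠ b ∧ c.2.1 ≠ a ∧ c.2.2 ≠ b)
    (hsw : ∀ σ : α ≃ β, (∀ a, H a (σ a)) → κ * N ^ 2 ≤
      ((Finset.univ.filter (fun z : α × α => H a (σ z.1) ∧ H z.1 (σ z.2) ∧ H z.2 (σ a))).card : ℝ)) :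
    (((cfFam H S D w).filter (fun σ => σ a = b)).card : ℝ) ≤
      2 / (κ * N) * (cfFam H S D w).card := by
  have hNpos : 0 < N := lt_of_lt_of_le (by positivity) hNκ
  have h20 : 20 ≤ κ * N := by
    rw [div_le_iff₀ hκ] at hNκ; linarith
  let π : α → α → Equiv.Perm α := fun x y => Equiv.swap a x * Equiv.swap x y
  let W : (α ≃ β) → Finset (α × α) := fun σ => Finset.univ.filter (fun z : α × α =>
    (H a (σ z.1) ∧ H z.1 (σ z.2) ∧ H z.2 (σ a)) ∧ z.1 ≠ a ∧ z.2 ≠ a ∧ z.1 ≠ z.2 ∧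
      z.1 ∉ D ∧ z.2 ∉ D ∧ ∀ u, ¬ Fr (u, σ u) (z.1, σ z.2))
  have hW : ∀ σ : α ≃ β, (∀ a, H a (σ a)) → κ * N ^ 2 / 2 ≤ ((W σ).card : ℝ) := by
    intro σ hσ
    have h0 := hsw σ hσ
    let X : Finset α := insert a D
    have hX : (X.card : ℝ) ≤ 2 := by
      have : X.card ≤ D.card + 1 := Finset.card_insert_le a D
      have h2 : X.card ≤ 2 := by omega
      exact_mod_cast h2
    have hcov : (Finset.univ.filter (fun z : α × α => H a (σ z.1) ∧ H z.1 (σ z.2) ∧ H z.2 (σ a)))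
        ⊆ W σ ∪ (X ×ˢ Finset.univ ∪ (Finset.univ ×ˢ X ∪ (Finset.univ.image (fun x : α => (x, x)) ∪
          Finset.univ.biUnion (fun u => Finset.univ.filter
            (fun z : α × α => Fr (u, σ u) (z.1, σ z.2)))))) := by
      rintro ⟨x, y⟩ hz
      simp only [Finset.mem_filter, Finset.mem_univ, true_and] at hz
      simp only [W, X, Finset.mem_union, Finset.mem_filter, Finset.mem_univ, true_and,
        Finset.mem_product, Finset.mem_image, Finset.mem_biUnion, Finset.mem_insert,
        Prod.mk.injEq, and_true]
      by_contra hcon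
      push Not at hcon
      obtain ⟨h1, h2, h3, h4, h5⟩ := hcon
      obtain ⟨u, hu⟩ := h1 hz h2.1 h3.1 (fun h => h4 x rfl h) h2.2 h3.2
      exact h5 u hu
    have hc1 := (Finset.card_le_card hcov).trans ((Finset.card_union_le _ _).trans
      (Nat.add_le_add_left ((Finset.card_union_le _ _).trans
      (Nat.add_le_add_left ((Finset.card_union_le _ _).trans
      (Nat.add_le_add_left (Finset.card_union_le _ _) _)) _)) _))
    have hc2 : (Finset.univ.image (fun x : α => (x, x))).card ≤ Fintype.card α :=
      Finset.card_image_le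
    have hc3 : ((Finset.univ.biUnion (fun u => Finset.univ.filter
            (fun z : α × α => Fr (u, σ u) (z.1, σ z.2)))).card : ℝ) ≤ μ * N ^ 2 := by
      have : ((Finset.univ.biUnion (fun u => Finset.univ.filter
            (fun z : α × α => Fr (u, σ u) (z.1, σ z.2)))).card : ℝ) ≤
          ∑ u : α, ((Finset.univ.filter
            (fun z : α × α => Fr (u, σ u) (z.1, σ z.2))).card : ℝ) := by
        exact_mod_cast Finset.card_biUnion_le
      refine this.trans ?_
      have h2 : ∀ u ∈ (Finset.univ : Finset α), ((Finset.univ.filter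
            (fun z : α × α => Fr (u, σ u) (z.1, σ z.2))).card : ℝ) ≤ μ * N := by
        intro u _
        refine le_trans ?_ (hbd (u, σ u))
        have : (Finset.univ.filter
            (fun z : α × α => Fr (u, σ u) (z.1, σ z.2))).card ≤
            (Finset.univ.filter (fun f => Fr (u, σ u) f)).card := by
          apply Finset.card_le_card_of_injOn (fun z : α × α => (z.1, σ z.2))
          · intro z hz
            simpa using hz
          · intro z _ z' _ h
            simp only [Prod.mk.injEq, EmbeddingLike.apply_eq_iff_eq] at h
            exact Prod.ext h.1 h.2
        exact_mod_cast this
      have h3 := Finset.sum_le_card_nsmul _ _ _ h2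
      rw [nsmul_eq_mul, Finset.card_univ] at h3
      have : (Fintype.card α : ℝ) * (μ * N) ≤ N * (μ * N) := by gcongr
      nlinarith
    have hc4 : ((X ×ˢ (Finset.univ : Finset α)).card : ℝ) ≤ 2 * N := by
      rw [Finset.card_product, Finset.card_univ]; push_cast; gcongr
    have hc5 : (((Finset.univ : Finset α) ×ˢ X).card : ℝ) ≤ 2 * N := by
      rw [Finset.card_product, Finset.card_univ]; push_cast
      rw [mul_comm]; gcongr
    have hc1' : ((Finset.univ.filter (fun z : α × α => H a (σ z.1) ∧ H z.1 (σ z.2) ∧ H z.2 (σ a))).card : ℝ)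
        ≤ (W σ).card + ((X ×ˢ (Finset.univ : Finset α)).card + ((((Finset.univ : Finset α) ×ˢ X).card)
          + ((Finset.univ.image (fun x : α => (x, x))).card + (Finset.univ.biUnion (fun u => Finset.univ.filter
            (fun z : α × α => Fr (u, σ u) (z.1, σ z.2)))).card))) := by
      exact_mod_cast hc1
    have hc2' : ((Finset.univ.image (fun x : α => (x, x))).card : ℝ) ≤ N :=
      le_trans (by exact_mod_cast hc2) hN
    have h5N : 5 * N ≤ κ * N ^ 2 / 4 := by nlinarith
    have hmm : μ * N ^ 2 ≤ κ / 4 * N ^ 2 := by gcongr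
    linarith
  set 𝒢 := cfFam H S D w with h𝒢
  set 𝒢' := 𝒢.filter (fun σ => σ a = b)
  let T := 𝒢'.sigma W
  have hT1 : (𝒢'.card : ℝ) * (κ * N ^ 2 / 2) ≤ (T.card : ℝ) := by
    rw [Finset.card_sigma]; push_cast
    rw [← nsmul_eq_mul]
    apply Finset.card_nsmul_le_sum
    intro σ hσ
    apply hW
    have := (Finset.mem_filter.1 hσ).1
    rw [h𝒢, cfFam, Finset.mem_filter] at this
    exact this.2.1
  have hpi : ∀ x y, x ≠ a → y ≠ a → x ≠ y → π x y a = x ∧ π x y x = y ∧ π x y y = a ∧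
      ∀ z, z ≠ a → z ≠ x → z ≠ y → π x y z = z := by
    intro x y hx hy hxy
    refine ⟨?_, ?_, ?_, ?_⟩
    · simp only [π, Equiv.Perm.mul_apply]
      rw [Equiv.swap_apply_of_ne_of_ne hx.symm hy.symm, Equiv.swap_apply_left]
    · simp only [π, Equiv.Perm.mul_apply]
      rw [Equiv.swap_apply_left, Equiv.swap_apply_of_ne_of_ne hy hxy.symm]
    · simp only [π, Equiv.Perm.mul_apply]
      rw [Equiv.swap_apply_right, Equiv.swap_apply_right]
    · intro z h1 h2 h3
      simp only [π, Equiv.Perm.mul_apply]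
      rw [Equiv.swap_apply_of_ne_of_ne h2 h3, Equiv.swap_apply_of_ne_of_ne h1 h2]
  have hT2 : T.card ≤ (𝒢 ×ˢ (Finset.univ : Finset α)).card := by
    apply Finset.card_le_card_of_injOn (fun t => ((π t.2.1 t.2.2).trans t.1, t.2.1))
    · rintro ⟨σ, x, y⟩ ht
      have ht' := Finset.mem_sigma.1 (Finset.mem_coe.1 ht)
      obtain ⟨hσ, hz⟩ := ht'
      obtain ⟨hσ1, hσ2⟩ := Finset.mem_filter.1 hσ
      rw [h𝒢, cfFam, Finset.mem_filter] at hσ1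
      obtain ⟨-, hH, hSS, hDD⟩ := hσ1
      simp only [W, Finset.mem_filter, Finset.mem_univ, true_and] at hz
      obtain ⟨⟨e1, e2, e3⟩, hx, hy, hxy, hxD, hyD, hconf⟩ := hz
      obtain ⟨p1, p2, p3, p4⟩ := hpi x y hx hy hxy
      dsimp only at hσ2 
      simp only [Finset.coe_product, Set.mem_prod, Finset.mem_coe, Finset.mem_univ, and_true]
      rw [h𝒢, cfFam, Finset.mem_filter]
      refine ⟨Finset.mem_univ _, ?_, ?_, ?_⟩
      · intro z
        simp only [Equiv.trans_apply]
        by_cases h1 : z = a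
        · subst h1; rw [p1]; exact e1
        by_cases h2 : z = x
        · subst h2; rw [p2]; exact e2
        by_cases h3 : z = y
        · subst h3; rw [p3]; exact e3
        rw [p4 z h1 h2 h3]; exact hH z
      · rintro ⟨⟨c1, d1⟩, ⟨c2, d2⟩⟩ hc ⟨hc1, hc2⟩
        obtain ⟨hF, hne⟩ := hS _ hc
        obtain ⟨v1, v2, v3, v4⟩ := hav _ hc
        have hold := hSS _ hc
        simp only [Equiv.trans_apply] at hc1 hc2 hF hne v1 v2 v3 v4 hold
        have hy1 : c1 ≠ y := by
          rintro rfl; rw [p3] at hc1; exact v2 (hc1.symm.trans hσ2)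
        have hy2 : c2 ≠ y := by
          rintro rfl; rw [p3] at hc2; exact v4 (hc2.symm.trans hσ2)
        by_cases h1 : c1 = x
        · have h2 : c2 ≠ x := fun h => hne (h1.trans h.symm)
          rw [p4 c2 v3 h2 hy2] at hc2
          rw [h1, p2] at hc1
          apply hconf c2
          rw [hc2, hc1, ← h1]
          exact hsym _ _ hF
        · rw [p4 c1 v1 h1 hy1] at hc1
          by_cases h2 : c2 = x
          · rw [h2, p2] at hc2
            apply hconf c1
            rw [hc2, hc1, ← h2]
            exact hF
          · rw [p4 c2 v3 h2 hy2] at hc2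
            exact hold ⟨hc1, hc2⟩
      · intro z hz
        simp only [Equiv.trans_apply]
        rw [p4 z (fun h => haD (h ▸ hz)) (fun h => hxD (h ▸ hz)) (fun h => hyD (h ▸ hz))]
        exact hDD z hz
    · rintro ⟨σ, x, y⟩ ht ⟨σ', x', y'⟩ ht' heq
      obtain ⟨hσ, hz⟩ := Finset.mem_sigma.1 (Finset.mem_coe.1 ht)
      obtain ⟨hσ', hz'⟩ := Finset.mem_sigma.1 (Finset.mem_coe.1 ht')
      have hb := (Finset.mem_filter.1 hσ).2
      have hb' := (Finset.mem_filter.1 hσ').2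
      simp only [W, Finset.mem_filter, Finset.mem_univ, true_and] at hz hz'
      obtain ⟨-, hx, hy, hxy, -⟩ := hz
      obtain ⟨-, hx', hy', hxy', -⟩ := hz'
      simp only [Prod.mk.injEq] at heq
      obtain ⟨h1, rfl⟩ := heq
      dsimp only at hb hb' 
      have hyy : y = y' := by
        have q1 : ((π x y).trans σ) y = b := by
          simp only [Equiv.trans_apply]; rw [(hpi x y hx hy hxy).2.2.1, hb]
        have q2 : ((π x y').trans σ') y' = b := by
          simp only [Equiv.trans_apply]; rw [(hpi x y' hx hy' hxy').2.2.1, hb']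
        rw [← h1] at q2
        exact ((π x y).trans σ).injective (q1.trans q2.symm)
      subst hyy
      have : σ = σ' := by
        ext z
        have := congrArg (fun f : α ≃ β => f ((π x y).symm z)) h1
        simpa using this
      subst this
      rfl
  have hT2' : (T.card : ℝ) ≤ 𝒢.card * N := by
    rw [Finset.card_product, Finset.card_univ] at hT2
    have : (T.card : ℝ) ≤ 𝒢.card * Fintype.card α := by exact_mod_cast hT2
    refine this.trans ?_
    gcongr
  have hfin : (𝒢'.card : ℝ) * (κ * N ^ 2 / 2) ≤ 𝒢.card * N := hT1.trans hT2'
  rw [div_mul_eq_mul_div, le_div_iff₀ (by positivity)]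
  have : (𝒢'.card : ℝ) * (κ * N) * N ≤ 2 * 𝒢.card * N := by nlinarith
  exact le_of_mul_le_mul_right this hNpos
end Switch
section MainLLL
open Classical in
theorem cf_main {α β : Type*} [Fintype α] [Fintype β] (H : α → β → Prop) (P : α → Prop)
    (Fr : α × β → α × β → Prop) (N μ κ : ℝ) (hN : (Fintype.card α : ℝ) ≤ N)
    (hsym : ∀ e f, Fr e f → Fr f e)
    (hbd : ∀ e, ((Finset.univ.filter (fun f => Fr e f)).card : ℝ) ≤ μ * N)
    (hκ : 0 < κ) (hκ1 : κ ≤ 1) (hμκ : μ ≤ κ ^ 2 / 256) (hμ : 0 ≤ μ)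
    (hNκ : 20 / κ ≤ N)
    (hsw : ∀ σ : α ≃ β, (∀ a, H a (σ a)) → ∀ a, P a → κ * N ^ 2 ≤
      ((Finset.univ.filter (fun z : α × α => H a (σ z.1) ∧ H z.1 (σ z.2) ∧ H z.2 (σ a))).card : ℝ))
    (hQ : ∀ a b, H a b → ¬ P a → ∀ a' b', H a' b' → a ≠ a' → ¬ Fr (a, b) (a', b'))
    (hex : ∃ σ : α ≃ β, ∀ a, H a (σ a)) :
    ∃ σ : α ≃ β, (∀ a, H a (σ a)) ∧ ∀ a a', a ≠ a' → ¬ Fr (a, σ a) (a', σ a') := by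
  obtain ⟨σ₀, hσ₀⟩ := hex
  have hNpos : 0 < N := lt_of_lt_of_le (by positivity) hNκ
  have h20 : 20 ≤ κ * N := by
    rw [div_le_iff₀ hκ] at hNκ; linarith
  have hμκ4 : μ ≤ κ / 4 := by nlinarith
  have hNβ : (Fintype.card β : ℝ) ≤ N := by rw [← Fintype.card_congr σ₀]; exact hN
  let Ω₀ : Finset (α ≃ β) := Finset.univ.filter (fun σ => ∀ a, H a (σ a))
  let B : ((α × β) × (α × β)) → (α ≃ β) → Prop := fun c σ => σ c.1.1 = c.1.2 ∧ σ c.2.1 = c.2.2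
  let T : Finset ((α × β) × (α × β)) := Finset.univ.filter (fun c =>
    Fr c.1 c.2 ∧ c.1.1 ≠ c.2.1 ∧ P c.1.1 ∧ P c.2.1)
  let U : ((α × β) × (α × β)) → Finset (α × β) := fun c => Finset.univ.filter (fun e =>
    e.1 = c.1.1 ∨ e.2 = c.1.2 ∨ e.1 = c.2.1 ∨ e.2 = c.2.2)
  let Γ : ((α × β) × (α × β)) → Finset ((α × β) × (α × β)) := fun c =>
    T.filter (fun c' => c'.1 ∈ U c ∨ c'.2 ∈ U c)
  have hU : ∀ c, ((U c).card : ℝ) ≤ 4 * N := by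
    intro c
    have hsub : U c ⊆ ({c.1.1} ×ˢ Finset.univ) ∪ ((Finset.univ ×ˢ {c.1.2}) ∪
        (({c.2.1} ×ˢ Finset.univ) ∪ (Finset.univ ×ˢ {c.2.2}))) := by
      rintro ⟨x, y⟩ h
      simpa [U, eq_comm] using h
    have h1 := (Finset.card_le_card hsub).trans ((Finset.card_union_le _ _).trans
      (Nat.add_le_add_left ((Finset.card_union_le _ _).trans
      (Nat.add_le_add_left (Finset.card_union_le _ _) _)) _))
    simp only [Finset.card_product, Finset.card_singleton, Finset.card_univ, one_mul, mul_one] at h1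
    have h2 : ((U c).card : ℝ) ≤ Fintype.card β + (Fintype.card α + (Fintype.card β +
      Fintype.card α)) := by exact_mod_cast h1
    linarith
  have hΓ : ∀ c, ((Γ c).card : ℝ) ≤ 8 * μ * N ^ 2 + 1 := by
    intro c
    have hsub : Γ c ⊆ (U c).biUnion (fun e =>
        (Finset.univ.filter (fun f => Fr e f)).image (fun f => (e, f))) ∪
        (U c).biUnion (fun e =>
        (Finset.univ.filter (fun f => Fr e f)).image (fun f => (f, e))) := by
      rintro ⟨e, f⟩ h
      obtain ⟨h1, h2⟩ := Finset.mem_filter.1 h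
      have h1 := (Finset.mem_filter.1 h1).2.1
      rcases h2 with h2 | h2
      · apply Finset.mem_union_left
        refine Finset.mem_biUnion.2 ⟨e, h2, Finset.mem_image.2 ⟨f, ?_, rfl⟩⟩
        exact Finset.mem_filter.2 ⟨Finset.mem_univ _, h1⟩
      · apply Finset.mem_union_right
        refine Finset.mem_biUnion.2 ⟨f, h2, Finset.mem_image.2 ⟨e, ?_, rfl⟩⟩
        exact Finset.mem_filter.2 ⟨Finset.mem_univ _, hsym _ _ h1⟩
    have hgen : ∀ g : (α × β) → (α × β) → ((α × β) × (α × β)),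
        (((U c).biUnion (fun e =>
        (Finset.univ.filter (fun f => Fr e f)).image (g e))).card : ℝ) ≤ 4 * N * (μ * N) := by
      intro g
      have h1 : (((U c).biUnion (fun e =>
        (Finset.univ.filter (fun f => Fr e f)).image (g e))).card : ℝ) ≤
        ∑ e ∈ U c, (((Finset.univ.filter (fun f => Fr e f)).image (g e)).card : ℝ) := by
        exact_mod_cast Finset.card_biUnion_le
      have h2 : ∀ e ∈ U c,
          (((Finset.univ.filter (fun f => Fr e f)).image (g e)).card : ℝ) ≤ μ * N := by
        intro e _
        refine le_trans ?_ (hbd e)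
        exact_mod_cast Finset.card_image_le
      have h3 := Finset.sum_le_card_nsmul _ _ _ h2
      rw [nsmul_eq_mul] at h3
      have h4 : ((U c).card : ℝ) * (μ * N) ≤ 4 * N * (μ * N) := by
        have := hU c
        gcongr
      linarith
    have h1 := (Finset.card_le_card hsub).trans (Finset.card_union_le _ _)
    have h2 := hgen (fun e f => (e, f))
    have h3 := hgen (fun e f => (f, e))
    have h4 := (Nat.cast_le (α := ℝ)).2 h1
    push_cast at h4
    nlinarith
  have hgood : ∀ S (w : α → β), cfGood Ω₀ B S = cfFam H S ∅ w := by
    intro S w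
    ext σ
    simp [cfGood, cfFam, Ω₀, B]
  have hne : Ω₀.Nonempty := ⟨σ₀, Finset.mem_filter.2 ⟨Finset.mem_univ _, hσ₀⟩⟩
  have hlll := cf_lll Ω₀ B Γ ((2 / (κ * N)) ^ 2) (8 * μ * N ^ 2 + 1) (by positivity)
    (by nlinarith [sq_nonneg N, mul_nonneg hμ (sq_nonneg N)]) (by
      have e1 : 4 * (2 / (κ * N)) ^ 2 * (8 * μ * N ^ 2 + 1) =
          (128 * (μ * N ^ 2) + 16) / (κ * N) ^ 2 := by
        field_simp; ring
      rw [e1, div_le_one (by positivity)]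
      have e2 : μ * N ^ 2 ≤ κ ^ 2 / 256 * N ^ 2 := by gcongr
      nlinarith) hne hΓ T (by
      rintro ⟨⟨a, b⟩, ⟨a2, b2⟩⟩ hcT S hST hdis
      obtain ⟨hF, hne', hPa, hPa2⟩ := (Finset.mem_filter.1 hcT).2
      dsimp only at hne' hPa hPa2
      have hS : ∀ c ∈ S, Fr c.1 c.2 ∧ c.1.1 ≠ c.2.1 := by
        intro c hc
        have := (Finset.mem_filter.1 (hST hc)).2
        exact ⟨this.1, this.2.1⟩
      have htouch : ∀ c ∈ S, c.1 ∉ U ((a, b), (a2, b2)) ∧ c.2 ∉ U ((a, b), (a2, b2)) := by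
        intro c hc
        have h1 := Finset.disjoint_left.1 hdis hc
        constructor <;> intro h <;> apply h1 <;> refine Finset.mem_filter.2 ⟨hST hc, ?_⟩
        · exact Or.inl h
        · exact Or.inr h
      simp only [U, Finset.mem_filter, Finset.mem_univ, true_and, not_or] at htouch
      have s1 := cf_switch H S {a2} (fun _ => b2) (by simp) Fr N μ κ hN hsym hbd hS hκ hμκ4 hμ hNκ
        a b (by simpa using hne')
        (fun c hc => ⟨(htouch c hc).1.1, (htouch c hc).1.2.1, (htouch c hc).2.1,
          (htouch c hc).2.2.1⟩) (fun σ hσ => hsw σ hσ a hPa)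
      have s2 := cf_switch H S ∅ (fun _ => b2) (by simp) Fr N μ κ hN hsym hbd hS hκ hμκ4 hμ hNκ
        a2 b2 (by simp)
        (fun c hc => ⟨(htouch c hc).1.2.2.1, (htouch c hc).1.2.2.2, (htouch c hc).2.2.2.1,
          (htouch c hc).2.2.2.2⟩) (fun σ hσ => hsw σ hσ a2 hPa2)
      rw [hgood S (fun _ => b2)]
      have e2 : (cfFam H S ∅ (fun _ => b2)).filter (fun σ => σ a2 = b2) =
          (cfFam H S {a2} (fun _ => b2)) := by
        ext σ
        simp [cfFam]
        tauto
      rw [e2] at s2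
      have hpos : 0 ≤ 2 / (κ * N) := by positivity
      have fin : (((cfFam H S {a2} (fun _ => b2)).filter (fun σ => σ a = b)).card : ℝ) ≤
          (2 / (κ * N)) ^ 2 * (cfFam H S ∅ (fun _ => b2)).card := by
        refine s1.trans ?_
        rw [pow_two, mul_assoc]
        exact mul_le_mul_of_nonneg_left s2 hpos
      convert fin using 3
      ext σ
      simp [cfFam, B]
      tauto)
  obtain ⟨σ, hσ⟩ := hlll
  simp only [cfGood, Finset.mem_filter] at hσ
  have hσH := (Finset.mem_filter.1 hσ.1).2
  refine ⟨σ, hσH, fun a a' haa hF => ?_⟩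
  by_cases h1 : P a
  · by_cases h2 : P a'
    · apply hσ.2 ((a, σ a), (a', σ a')) (Finset.mem_filter.2 ⟨Finset.mem_univ _, hF, haa, h1, h2⟩)
      exact ⟨rfl, rfl⟩
    · exact hQ a' _ (hσH a') h2 a _ (hσH a) haa.symm (hsym _ _ hF)
  · exact hQ a _ (hσH a) h1 a' _ (hσH a') haa hF
end MainLLL
section Rosenfeld

open Classical in
theorem cf_override {D K : Type*} [Fintype D] [Fintype K] (Q : (D → K) → Prop) (φ : D → K)
    (S : Finset D) (hQ : ∀ f, ∀ s ∈ S, ∀ k, Q f → Q (Function.update f s k)) :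
    (Finset.univ.filter (fun f : D → K => Q f ∧ ∀ s ∈ S, f s = φ s)).card *
      (Fintype.card K) ^ S.card ≤ (Finset.univ.filter (fun f : D → K => Q f)).card := by
  induction S using Finset.induction_on with
  | empty => simp
  | insert s S hs ih =>
    have ih' := ih (fun f t ht k hf => hQ f t (Finset.mem_insert_of_mem ht) k hf)
    rw [Finset.card_insert_of_notMem hs, pow_succ']
    have key : (Finset.univ.filter (fun f : D → K => Q f ∧ ∀ t ∈ insert s S, f t = φ t)).card *
        Fintype.card K ≤
        (Finset.univ.filter (fun f : D → K => Q f ∧ ∀ t ∈ S, f t = φ t)).card := by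
      rw [← Finset.card_univ, ← Finset.card_product]
      apply Finset.card_le_card_of_injOn (fun z => Function.update z.1 s z.2)
      · rintro ⟨f, k⟩ h
        have h := (Finset.mem_filter.1 (Finset.mem_product.1 (Finset.mem_coe.1 h)).1).2
        refine Finset.mem_coe.2 (Finset.mem_filter.2 ⟨Finset.mem_univ _,
          hQ f s (Finset.mem_insert_self _ _) k h.1, fun t ht => ?_⟩)
        have hts : t ≠ s := fun e => hs (e ▸ ht)
        simp only [Function.update_of_ne hts]
        exact h.2 t (Finset.mem_insert_of_mem ht)
      · rintro ⟨f, k⟩ h ⟨f', k'⟩ h' heq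
        have h := (Finset.mem_filter.1 (Finset.mem_product.1 (Finset.mem_coe.1 h)).1).2
        have h' := (Finset.mem_filter.1 (Finset.mem_product.1 (Finset.mem_coe.1 h')).1).2
        dsimp only at heq
        have e1 : k = k' := by have := congrFun heq s; simpa using this
        have e2 : f = f' := by
          funext t
          by_cases hts : t = s
          · subst hts
            exact (h.2 t (Finset.mem_insert_self _ _)).trans
              (h'.2 t (Finset.mem_insert_self _ _)).symm
          · have := congrFun heq t
            simpa [Function.update_of_ne hts] using this
        rw [e1, e2]
    calc _ = ((Finset.univ.filter (fun f : D → K => Q f ∧ ∀ t ∈ insert s S, f t = φ t)).card *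
        Fintype.card K) * Fintype.card K ^ S.card := by ring
      _ ≤ _ := Nat.mul_le_mul_right _ key
      _ ≤ _ := ih'

/-- `f` avoids all forbidden sets supported on `I`. -/
def cfOk {D K : Type*} (𝓗 : Finset (Finset (D × K))) (I : Finset D) (f : D → K) : Prop :=
  ∀ J ∈ 𝓗, (∀ q ∈ J, q.1 ∈ I) → ¬ ∀ q ∈ J, f q.1 = q.2

open Classical in
noncomputable def cfG {D K : Type*} [Fintype D] [Fintype K] (𝓗 : Finset (Finset (D × K)))
    (I : Finset D) : ℝ := ((Finset.univ.filter (fun f : D → K => cfOk 𝓗 I f)).card : ℝ)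

open Classical in
theorem cf_chain {D K : Type*} [Fintype D] [Fintype K] (𝓗 : Finset (Finset (D × K))) (n : ℕ)
    (h : ∀ I : Finset D, I.card < n → ∀ i ∉ I, cfG 𝓗 I ≤ 2 * cfG 𝓗 (insert i I))
    (S : Finset D) : ∀ I : Finset D, Disjoint S I → I.card + S.card ≤ n →
      cfG 𝓗 I ≤ 2 ^ S.card * cfG 𝓗 (S ∪ I) := by
  induction S using Finset.induction_on with
  | empty => intro I _ _; simp
  | insert s S hs ih =>
    intro I hd hc
    rw [Finset.card_insert_of_notMem hs] at hc ⊢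
    rw [Finset.disjoint_insert_left] at hd
    have h1 := ih I hd.2 (by omega)
    have h2 := h (S ∪ I) (by rw [Finset.card_union_of_disjoint hd.2]; omega) s
      (by simp [hs, hd.1])
    rw [Finset.insert_union, pow_succ]
    have : (0:ℝ) < 2 ^ S.card := by positivity
    nlinarith

open Classical in
theorem cf_rosenfeld {D K : Type*} [Fintype D] [Fintype K] (hK : 0 < Fintype.card K)
    (𝓗 : Finset (Finset (D × K))) (hne : ∀ J ∈ 𝓗, J.Nonempty)
    (hw : ∀ q : D × K, ∑ J ∈ 𝓗.filter (fun J => q ∈ J),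
      (2 / (Fintype.card K : ℝ)) ^ (J.card - 1) ≤ 1 / 2) :
    ∃ f : D → K, ∀ J ∈ 𝓗, ¬ ∀ q ∈ J, f q.1 = q.2 := by
  set m : ℝ := (Fintype.card K : ℝ) with hm
  have hmpos : 0 < m := by rw [hm]; exact_mod_cast hK
  have step : ∀ n : ℕ, ∀ I : Finset D, I.card = n → ∀ i ∉ I,
      cfG 𝓗 I ≤ 2 * cfG 𝓗 (insert i I) := by
    intro n
    induction n using Nat.strong_induction_on with
    | _ n ihn =>
      intro I hI i hi
      have hG0 : 0 ≤ cfG 𝓗 I := by unfold cfG; positivity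
      -- per J bound
      have hJ : ∀ k : K, ∀ J ∈ 𝓗.filter (fun J => (i, k) ∈ J),
          ((Finset.univ.filter (fun f : D → K => cfOk 𝓗 I f ∧ (∀ q ∈ J, q.1 ∈ insert i I) ∧
            ∀ q ∈ J, f q.1 = q.2)).card : ℝ) ≤ (2 / m) ^ (J.card - 1) * (cfG 𝓗 I / m) := by
        intro k J hJm
        obtain ⟨hJ𝓗, hikJ⟩ := Finset.mem_filter.1 hJm
        by_cases hemp : ∃ f : D → K, cfOk 𝓗 I f ∧ (∀ q ∈ J, q.1 ∈ insert i I) ∧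
            ∀ q ∈ J, f q.1 = q.2
        swap
        · have : Finset.univ.filter (fun f : D → K => cfOk 𝓗 I f ∧
              (∀ q ∈ J, q.1 ∈ insert i I) ∧ ∀ q ∈ J, f q.1 = q.2) = ∅ := by
            ext f
            simp only [Finset.mem_filter, Finset.mem_univ, true_and, Finset.notMem_empty,
              iff_false]
            exact fun hf => hemp ⟨f, hf⟩
          rw [this]
          simp only [Finset.card_empty, Nat.cast_zero]
          positivity
        obtain ⟨φ, hφ1, hφ2, hφ3⟩ := hemp
        set S := J.image Prod.fst with hS
        have hScard : S.card = J.card := by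
          apply Finset.card_image_of_injOn
          rintro ⟨x, y⟩ hx ⟨x', y'⟩ hx' he
          dsimp only at he
          subst he
          have h1 := hφ3 _ hx
          have h2 := hφ3 _ hx'
          dsimp only at h1 h2
          rw [← h1, ← h2]
        have hiS : i ∈ S := Finset.mem_image.2 ⟨(i, k), hikJ, rfl⟩
        have hov := cf_override (cfOk 𝓗 (I \ S)) φ S (by
          intro f s hs k' hf J' hJ' hsub hcon
          apply hf J' hJ' hsub
          intro q hq
          have h1 := hcon q hq
          have h2 := hsub q hq
          have : q.1 ≠ s := by
            rintro rfl
            exact (Finset.mem_sdiff.1 h2).2 hs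
          rwa [Function.update_of_ne this] at h1)
        have hmono : (Finset.univ.filter (fun f : D → K => cfOk 𝓗 I f ∧
            (∀ q ∈ J, q.1 ∈ insert i I) ∧ ∀ q ∈ J, f q.1 = q.2)).card ≤
            (Finset.univ.filter (fun f : D → K => cfOk 𝓗 (I \ S) f ∧
              ∀ s ∈ S, f s = φ s)).card := by
          apply Finset.card_le_card
          intro f hf
          obtain ⟨h1, h2, h3⟩ := (Finset.mem_filter.1 hf).2
          refine Finset.mem_filter.2 ⟨Finset.mem_univ _, ?_, ?_⟩
          · intro J' hJ' hsub
            exact h1 J' hJ' (fun q hq => (Finset.mem_sdiff.1 (hsub q hq)).1)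
          · intro s hs
            obtain ⟨q, hq, rfl⟩ := Finset.mem_image.1 hs
            rw [h3 q hq, hφ3 q hq]
        have hT : (S.erase i) ∪ (I \ S) = I := by
          ext x
          simp only [Finset.mem_union, Finset.mem_erase, Finset.mem_sdiff]
          constructor
          · rintro (⟨h1, h2⟩ | h)
            · obtain ⟨q, hq, rfl⟩ := Finset.mem_image.1 h2
              exact (Finset.mem_insert.1 (hφ2 q hq)).resolve_left h1
            · exact h.1
          · intro hx
            by_cases hxS : x ∈ S
            · left; exact ⟨fun e => hi (e ▸ hx), hxS⟩
            · right; exact ⟨hx, hxS⟩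
        have hd : Disjoint (S.erase i) (I \ S) := by
          rw [Finset.disjoint_left]
          intro x hx hx'
          exact (Finset.mem_sdiff.1 hx').2 (Finset.mem_of_mem_erase hx)
        have hch := cf_chain 𝓗 n (fun I' hI' j hj => ihn I'.card hI' I' rfl j hj)
          (S.erase i) (I \ S) hd (by
            rw [add_comm, ← Finset.card_union_of_disjoint hd, hT, hI])
        rw [hT, Finset.card_erase_of_mem hiS, hScard] at hch
        rw [hScard] at hov
        have hov' : ((Finset.univ.filter (fun f : D → K => cfOk 𝓗 (I \ S) f ∧
              ∀ s ∈ S, f s = φ s)).card : ℝ) * m ^ J.card ≤ cfG 𝓗 (I \ S) := by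
          unfold cfG
          rw [hm]
          exact_mod_cast hov
        have hmono' : ((Finset.univ.filter (fun f : D → K => cfOk 𝓗 I f ∧
            (∀ q ∈ J, q.1 ∈ insert i I) ∧ ∀ q ∈ J, f q.1 = q.2)).card : ℝ) ≤
            ((Finset.univ.filter (fun f : D → K => cfOk 𝓗 (I \ S) f ∧
              ∀ s ∈ S, f s = φ s)).card : ℝ) := by exact_mod_cast hmono
        have hJpos : 0 < J.card := Finset.card_pos.2 ⟨_, hikJ⟩
        obtain ⟨j, hj⟩ : ∃ j, J.card = j + 1 := ⟨J.card - 1, by omega⟩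
        rw [hj] at hch hov' ⊢
        simp only [Nat.add_sub_cancel] at hch ⊢
        have e : (2 / m) ^ j * (cfG 𝓗 I / m) = 2 ^ j * cfG 𝓗 I / m ^ (j + 1) := by
          rw [div_pow, pow_succ]; field_simp
        rw [e, le_div_iff₀ (by positivity)]
        calc _ ≤ _ := mul_le_mul_of_nonneg_right hmono' (by positivity)
          _ ≤ _ := hov'
          _ ≤ _ := hch
      have hcov : (Finset.univ.filter (fun f : D → K => cfOk 𝓗 I f)) ⊆
          (Finset.univ.filter (fun f : D → K => cfOk 𝓗 (insert i I) f)) ∪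
          Finset.univ.biUnion (fun k : K => (𝓗.filter (fun J => (i, k) ∈ J)).biUnion (fun J =>
            Finset.univ.filter (fun f : D → K => cfOk 𝓗 I f ∧ (∀ q ∈ J, q.1 ∈ insert i I) ∧
            ∀ q ∈ J, f q.1 = q.2))) := by
        intro f hf
        have hf := (Finset.mem_filter.1 hf).2
        by_cases hok : cfOk 𝓗 (insert i I) f
        · exact Finset.mem_union_left _ (Finset.mem_filter.2 ⟨Finset.mem_univ _, hok⟩)
        · apply Finset.mem_union_right
          unfold cfOk at hok
          push Not at hok
          obtain ⟨J, hJ1, hJ2, hJ3⟩ := hok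
          have : ∃ q ∈ J, q.1 = i := by
            by_contra hcon
            push Not at hcon
            exact hf J hJ1 (fun q hq => (Finset.mem_insert.1 (hJ2 q hq)).resolve_left
              (hcon q hq)) hJ3
          obtain ⟨⟨x, k⟩, hq, hqi⟩ := this
          dsimp only at hqi
          subst hqi
          refine Finset.mem_biUnion.2 ⟨k, Finset.mem_univ _, Finset.mem_biUnion.2 ⟨J,
            Finset.mem_filter.2 ⟨hJ1, hq⟩, Finset.mem_filter.2 ⟨Finset.mem_univ _, hf, hJ2, hJ3⟩⟩⟩
      have h1 := (Finset.card_le_card hcov).trans (Finset.card_union_le _ _)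
      have h2 := (Nat.cast_le (α := ℝ)).2 h1
      rw [Nat.cast_add] at h2
      have h3 : ((Finset.univ.biUnion (fun k : K => (𝓗.filter (fun J => (i, k) ∈ J)).biUnion
          (fun J => Finset.univ.filter (fun f : D → K => cfOk 𝓗 I f ∧
            (∀ q ∈ J, q.1 ∈ insert i I) ∧ ∀ q ∈ J, f q.1 = q.2)))).card : ℝ) ≤
            cfG 𝓗 I / 2 := by
        have b1 : ∀ k : K, ((((𝓗.filter (fun J => (i, k) ∈ J)).biUnion
          (fun J => Finset.univ.filter (fun f : D → K => cfOk 𝓗 I f ∧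
            (∀ q ∈ J, q.1 ∈ insert i I) ∧ ∀ q ∈ J, f q.1 = q.2)))).card : ℝ) ≤
            cfG 𝓗 I / m / 2 := by
          intro k
          refine (Nat.cast_le (α := ℝ)).2 Finset.card_biUnion_le |>.trans ?_
          rw [Nat.cast_sum]
          refine (Finset.sum_le_sum (hJ k)).trans ?_
          rw [← Finset.sum_mul]
          have := hw (i, k)
          have hp : 0 ≤ cfG 𝓗 I / m := by positivity
          nlinarith
        refine (Nat.cast_le (α := ℝ)).2 Finset.card_biUnion_le |>.trans ?_
        rw [Nat.cast_sum]
        refine (Finset.sum_le_sum (fun k _ => b1 k)).trans ?_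
        rw [Finset.sum_const, Finset.card_univ, nsmul_eq_mul, ← hm]
        apply le_of_eq
        field_simp
      have h4 : cfG 𝓗 I ≤ cfG 𝓗 (insert i I) + cfG 𝓗 I / 2 := by
        refine le_trans h2 ?_
        exact add_le_add le_rfl h3
      linarith
  have hfin := cf_chain 𝓗 (Fintype.card D) (fun I _ i hi => step _ I rfl i hi) Finset.univ ∅
    (Finset.disjoint_empty_right _) (by simp)
  have h0 : 0 < cfG 𝓗 (∅ : Finset D) := by
    unfold cfG
    have : Nonempty K := Fintype.card_pos_iff.1 hK
    have : (Finset.univ.filter (fun f : D → K => cfOk 𝓗 ∅ f)).Nonempty := by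
      refine ⟨fun _ => this.some, Finset.mem_filter.2 ⟨Finset.mem_univ _, ?_⟩⟩
      intro J hJ h
      obtain ⟨q, hq⟩ := hne J hJ
      exact absurd (h q hq) (Finset.notMem_empty _)
    exact_mod_cast this.card_pos
  have h1 : 0 < cfG 𝓗 (Finset.univ : Finset D) := by
    rw [Finset.union_empty] at hfin
    by_contra hcon
    push Not at hcon
    have : (0:ℝ) < 2 ^ (Finset.univ : Finset D).card := by positivity
    nlinarith
  unfold cfG at h1
  have h2 : 0 < (Finset.univ.filter (fun f : D → K => cfOk 𝓗 Finset.univ f)).card := by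
    exact_mod_cast h1
  obtain ⟨f, hf⟩ := Finset.card_pos.1 h2
  refine ⟨f, fun J hJ => (Finset.mem_filter.1 hf).2 J hJ (fun _ _ => Finset.mem_univ _)⟩
end Rosenfeld
section Spread

theorem cf_sum_biUnion_le {ι X : Type*} [DecidableEq X] (s : Finset ι) (t : ι → Finset X)
    (g : X → ℝ) (hg : ∀ x, 0 ≤ g x) : ∑ x ∈ s.biUnion t, g x ≤ ∑ i ∈ s, ∑ x ∈ t i, g x := by
  classical
  induction s using Finset.induction_on with
  | empty => simp
  | insert a s ha ih =>
    rw [Finset.biUnion_insert, Finset.sum_insert ha]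
    have := Finset.sum_union_inter (s₁ := t a) (s₂ := s.biUnion t) (f := g)
    have h0 : 0 ≤ ∑ x ∈ t a ∩ s.biUnion t, g x := Finset.sum_nonneg (fun x _ => hg x)
    linarith

theorem cf_geom (p : ℕ) : ∑ j ∈ Finset.range (p + 1), (1 + ((p:ℝ) - j)) * 2 ^ (j + 1) ≤ 8 * 2 ^ p := by
  have hg : ∀ p : ℕ, ∑ j ∈ Finset.range (p + 1), (2:ℝ) ^ (j + 1) = 2 ^ (p + 2) - 2 := by
    intro p
    induction p with
    | zero => norm_num
    | succ p ih => rw [Finset.sum_range_succ, ih]; ring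
  induction p with
  | zero => norm_num
  | succ p ih =>
    rw [Finset.sum_range_succ]
    have e : ∑ j ∈ Finset.range (p + 1), (1 + (((p + 1 : ℕ):ℝ) - j)) * 2 ^ (j + 1) =
        ∑ j ∈ Finset.range (p + 1), (1 + ((p:ℝ) - j)) * 2 ^ (j + 1) +
        ∑ j ∈ Finset.range (p + 1), (2:ℝ) ^ (j + 1) := by
      rw [← Finset.sum_add_distrib]
      apply Finset.sum_congr rfl
      intro j _
      push_cast
      ring
    rw [e, hg]
    have e2 : (1 + (((p + 1 : ℕ):ℝ) - ((p + 1 : ℕ):ℝ))) * 2 ^ (p + 1 + 1) = (2:ℝ) ^ (p + 2) := by ring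
    rw [e2]
    have : (2:ℝ) ^ (p + 2) = 4 * 2 ^ p := by ring
    have h2 : (2:ℝ) ^ (p + 1) = 2 * 2 ^ p := by ring
    linarith

theorem cf_binom (L r k : ℕ) (m : ℝ) (hm : 0 < m) (h : 16 * (L:ℝ) / m + k ≤ r) (hL : 0 < L) :
    ((L - 1).choose r : ℝ) * (2 / m) ^ r ≤ 1 / 2 ^ k := by
  have h1 : ((L - 1).choose r : ℝ) ≤ (L:ℝ) ^ r / r.factorial := by
    refine (Nat.choose_le_pow_div r (L - 1)).trans ?_
    gcongr
    omega
  have h2 : ((L - 1).choose r : ℝ) * (2 / m) ^ r ≤ ((L:ℝ) ^ r / r.factorial) * (2 / m) ^ r := by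
    gcongr
  have hx : (0:ℝ) ≤ 16 * (L:ℝ) / m := by positivity
  have h3 := Real.pow_div_factorial_le_exp (16 * (L:ℝ) / m) hx r
  have e : ((L:ℝ) ^ r / r.factorial) * (2 / m) ^ r =
      ((16 * (L:ℝ) / m) ^ r / r.factorial) * (1 / 8) ^ r := by
    rw [div_mul_eq_mul_div, div_mul_eq_mul_div, ← mul_pow, ← mul_pow]
    congr 2
    field_simp
    ring
  have h4 : Real.exp (16 * (L:ℝ) / m) ≤ 4 ^ r := by
    have : Real.exp (16 * (L:ℝ) / m) ≤ Real.exp r := by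
      apply Real.exp_le_exp.2
      have : (0:ℝ) ≤ k := by positivity
      linarith
    refine this.trans ?_
    have e1 : Real.exp (r:ℝ) = (Real.exp 1) ^ r := by
      rw [← Real.exp_nat_mul, mul_one]
    rw [e1]
    gcongr
    have := Real.exp_one_lt_d9
    linarith
  have h5 : (4:ℝ) ^ r * (1 / 8) ^ r = (1 / 2) ^ r := by rw [← mul_pow]; norm_num
  have hkr : k ≤ r := by
    have : (k:ℝ) ≤ r := by linarith
    exact_mod_cast this
  have h6 : ((1:ℝ) / 2) ^ r ≤ (1 / 2) ^ k := pow_le_pow_of_le_one (by norm_num) (by norm_num) hkr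
  calc _ ≤ _ := h2
    _ = _ := e
    _ ≤ 4 ^ r * (1 / 8) ^ r := by gcongr; exact h3.trans h4
    _ = _ := h5
    _ ≤ _ := h6
    _ = _ := by rw [div_pow, one_pow]

open Classical in
theorem cf_card_pcard {X : Type*} (C : Finset X) (q : X) (hq : q ∈ C) (r : ℕ) :
    ((C.powersetCard (r + 1)).filter (fun J => q ∈ J)).card ≤ (C.card - 1).choose r := by
  rw [← Finset.card_erase_of_mem hq, ← Finset.card_powersetCard]
  apply Finset.card_le_card_of_injOn (fun J => J.erase q)
  · intro J hJ
    obtain ⟨h1, h2⟩ := Finset.mem_filter.1 (Finset.mem_coe.1 hJ)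
    rw [Finset.mem_powersetCard] at h1
    refine Finset.mem_coe.2 (Finset.mem_powersetCard.2 ⟨Finset.erase_subset_erase _ h1.1, ?_⟩)
    rw [Finset.card_erase_of_mem h2, h1.2]; rfl
  · intro J hJ J' hJ' h
    obtain ⟨_, h2⟩ := Finset.mem_filter.1 (Finset.mem_coe.1 hJ)
    obtain ⟨_, h2'⟩ := Finset.mem_filter.1 (Finset.mem_coe.1 hJ')
    dsimp only at h
    rw [← Finset.insert_erase h2, h, Finset.insert_erase h2']

open Classical in
theorem cf_spread {V D K : Type*} [Fintype V] [Fintype D] [Fintype K] (hK : 0 < Fintype.card K)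
    (c : V → D × K → ℕ) (R : D × K → D × K → Prop) (hsym : ∀ q q', R q q' → R q' q)
    (hR : ∀ q, ((Finset.univ.filter (fun q' => R q q')).card : ℝ) ≤ (Fintype.card K : ℝ) / 8)
    (Λ : ℕ) (Λ' : ℝ) (hΛ0 : 0 < Λ) (hΛ : ∀ q, ∑ v, c v q ≤ Λ)
    (hΛ' : ∀ v, ((∑ q, c v q : ℕ) : ℝ) ≤ Λ') :
    ∃ f : D → K, (∀ i j, i ≠ j → ¬ R (i, f i) (j, f j)) ∧
      ∀ v, ((∑ i, c v (i, f i) : ℕ) : ℝ) ≤ 32 * Λ' / Fintype.card K + 128 * Λ := by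
  set m : ℝ := (Fintype.card K : ℝ) with hm
  have hmpos : 0 < m := by rw [hm]; exact_mod_cast hK
  set p := Nat.clog 2 (8 * Λ) with hp
  have hp1 : 8 * Λ ≤ 2 ^ p := Nat.le_pow_clog (by norm_num) _
  have hp2 : 2 ^ p ≤ 16 * Λ := by
    have h1 := Nat.pow_pred_clog_lt_self (b := 2) (by norm_num) (x := 8 * Λ) (by omega)
    rw [← hp] at h1
    have : 0 < p := by
      by_contra h0
      have : p = 0 := by omega
      rw [this] at hp1
      omega
    obtain ⟨p', hp'⟩ : ∃ p', p = p' + 1 := ⟨p - 1, by omega⟩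
    rw [hp'] at h1 ⊢
    simp only [Nat.pred_succ] at h1
    rw [pow_succ]
    omega
  let C : V → ℕ → Finset (D × K) := fun v j =>
    Finset.univ.filter (fun q => c v q ≠ 0 ∧ Nat.log 2 (c v q) = j)
  let r : V → ℕ → ℕ := fun v j => ⌈16 * ((C v j).card : ℝ) / m⌉₊ + (p - j)
  have hcle : ∀ v q, c v q ≤ Λ := fun v q =>
    (Finset.single_le_sum (f := fun v => c v q) (fun _ _ => Nat.zero_le _)
      (Finset.mem_univ v)).trans (hΛ q)
  have hlogp : ∀ v q, c v q ≠ 0 → Nat.log 2 (c v q) ≤ p := by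
    intro v q hc
    have h1 := Nat.pow_log_le_self 2 hc
    have h2 : 2 ^ Nat.log 2 (c v q) ≤ 2 ^ p := by have := hcle v q; omega
    exact (Nat.pow_le_pow_iff_right (by norm_num)).1 h2
  let H1 : Finset (Finset (D × K)) := Finset.univ.biUnion (fun q =>
    (Finset.univ.filter (fun q' => R q q' ∧ q ≠ q')).image (fun q' => {q, q'}))
  let H2 : Finset (Finset (D × K)) := Finset.univ.biUnion (fun v =>
    (Finset.range (p + 1)).biUnion (fun j => (C v j).powersetCard (r v j + 1)))
  have hgnn : ∀ J : Finset (D × K), 0 ≤ (2 / m) ^ (J.card - 1) := fun J => by positivity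
  have w1 : ∀ q, ∑ J ∈ H1.filter (fun J => q ∈ J), (2 / m) ^ (J.card - 1) ≤ 1 / 4 := by
    intro q
    have hsub : H1.filter (fun J => q ∈ J) ⊆
        (Finset.univ.filter (fun q' => R q q' ∧ q ≠ q')).image (fun q' => {q, q'}) := by
      intro J hJ
      obtain ⟨h1, h2⟩ := Finset.mem_filter.1 hJ
      obtain ⟨q1, _, h1⟩ := Finset.mem_biUnion.1 h1
      obtain ⟨q2, h3, rfl⟩ := Finset.mem_image.1 h1
      obtain ⟨hR1, hne⟩ := (Finset.mem_filter.1 h3).2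
      rcases Finset.mem_insert.1 h2 with rfl | h4
      · exact h1
      · have := Finset.mem_singleton.1 h4
        subst this
        refine Finset.mem_image.2 ⟨q1, Finset.mem_filter.2 ⟨Finset.mem_univ _, hsym _ _ hR1,
          hne.symm⟩, Finset.pair_comm _ _⟩
    have hall : ∀ J ∈ (Finset.univ.filter (fun q' => R q q' ∧ q ≠ q')).image
        (fun q' => ({q, q'} : Finset (D × K))), (2 / m) ^ (J.card - 1) ≤ 2 / m := by
      intro J hJ
      obtain ⟨q', h, rfl⟩ := Finset.mem_image.1 hJ
      rw [Finset.card_pair (Finset.mem_filter.1 h).2.2]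
      simp
    calc _ ≤ _ := Finset.sum_le_sum_of_subset_of_nonneg hsub (fun J _ _ => hgnn J)
      _ ≤ _ := Finset.sum_le_card_nsmul _ _ _ hall
      _ ≤ (m / 8) * (2 / m) := by
        rw [nsmul_eq_mul]
        apply mul_le_mul_of_nonneg_right _ (by positivity)
        refine le_trans ?_ (hR q)
        have h1 : ((Finset.univ.filter (fun q' => R q q' ∧ q ≠ q')).image
          (fun q' => ({q, q'} : Finset (D × K)))).card ≤
          (Finset.univ.filter (fun q' => R q q')).card :=
          Finset.card_image_le.trans (Finset.card_le_card (fun x hx =>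
            Finset.mem_filter.2 ⟨Finset.mem_univ _, (Finset.mem_filter.1 hx).2.1⟩))
        exact_mod_cast h1
      _ = 1 / 4 := by field_simp; norm_num
  have w2 : ∀ q, ∑ J ∈ H2.filter (fun J => q ∈ J), (2 / m) ^ (J.card - 1) ≤ 1 / 8 := by
    intro q
    have hΛr : (0:ℝ) < Λ := by exact_mod_cast hΛ0
    have hsub : H2.filter (fun J => q ∈ J) ⊆ Finset.univ.biUnion (fun v =>
        ((C v (Nat.log 2 (c v q))).powersetCard (r v (Nat.log 2 (c v q)) + 1)).filter
          (fun J => q ∈ J)) := by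
      intro J hJ
      obtain ⟨h1, h2⟩ := Finset.mem_filter.1 hJ
      obtain ⟨v, _, h1⟩ := Finset.mem_biUnion.1 h1
      obtain ⟨j, hj, h1⟩ := Finset.mem_biUnion.1 h1
      have h3 := (Finset.mem_powersetCard.1 h1).1 h2
      have h4 := (Finset.mem_filter.1 h3).2.2
      subst h4
      exact Finset.mem_biUnion.2 ⟨v, Finset.mem_univ _, Finset.mem_filter.2 ⟨h1, h2⟩⟩
    have hv : ∀ v, ∑ J ∈ ((C v (Nat.log 2 (c v q))).powersetCard
        (r v (Nat.log 2 (c v q)) + 1)).filter (fun J => q ∈ J), (2 / m) ^ (J.card - 1) ≤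
        (c v q : ℝ) / (8 * Λ) := by
      intro v
      set j := Nat.log 2 (c v q) with hj
      by_cases hc : c v q = 0
      · rw [Finset.sum_eq_zero]
        · positivity
        · intro J hJ
          exfalso
          obtain ⟨h1, h2⟩ := Finset.mem_filter.1 hJ
          exact (Finset.mem_filter.1 ((Finset.mem_powersetCard.1 h1).1 h2)).2.1 hc
      have hqC : q ∈ C v j := Finset.mem_filter.2 ⟨Finset.mem_univ _, hc, rfl⟩
      have hall : ∀ J ∈ ((C v j).powersetCard (r v j + 1)).filter (fun J => q ∈ J),
          (2 / m) ^ (J.card - 1) ≤ (2 / m) ^ (r v j) := by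
        intro J hJ
        rw [(Finset.mem_powersetCard.1 (Finset.mem_filter.1 hJ).1).2]
        simp
      refine (Finset.sum_le_card_nsmul _ _ _ hall).trans ?_
      rw [nsmul_eq_mul]
      have h1 : ((((C v j).powersetCard (r v j + 1)).filter (fun J => q ∈ J)).card : ℝ) ≤
          (((C v j).card - 1).choose (r v j) : ℝ) := by
        refine (Nat.cast_le (α := ℝ)).2 ?_
        convert cf_card_pcard (C v j) q hqC (r v j)
      have h2 := cf_binom (C v j).card (r v j) (p - j) m hmpos (by
        have : 16 * ((C v j).card : ℝ) / m ≤ (⌈16 * ((C v j).card : ℝ) / m⌉₊ : ℝ) := Nat.le_ceil _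
        have e : ((r v j : ℕ) : ℝ) = (⌈16 * ((C v j).card : ℝ) / m⌉₊ : ℝ) + ((p - j : ℕ) : ℝ) := by
          exact Nat.cast_add _ _
        rw [e]
        linarith) (Finset.card_pos.2 ⟨q, hqC⟩)
      have h3 : (1:ℝ) / 2 ^ (p - j) ≤ (c v q : ℝ) / (8 * Λ) := by
        rw [div_le_div_iff₀ (by positivity) (by positivity), one_mul]
        have h4 := Nat.pow_log_le_self 2 hc
        rw [← hj] at h4
        have h5 : 2 ^ p = 2 ^ j * 2 ^ (p - j) := by
          rw [← pow_add]; congr 1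
          have := hlogp v q hc
          omega
        have h6 : 8 * Λ ≤ c v q * 2 ^ (p - j) := by
          calc _ ≤ _ := hp1
            _ = _ := h5
            _ ≤ _ := Nat.mul_le_mul_right _ h4
        exact_mod_cast h6
      calc _ ≤ _ := mul_le_mul_of_nonneg_right h1 (by positivity)
        _ ≤ _ := h2
        _ ≤ _ := h3
    calc _ ≤ _ := Finset.sum_le_sum_of_subset_of_nonneg hsub (fun J _ _ => hgnn J)
      _ ≤ _ := cf_sum_biUnion_le _ _ _ hgnn
      _ ≤ ∑ v, (c v q : ℝ) / (8 * Λ) := Finset.sum_le_sum (fun v _ => hv v)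
      _ = ((∑ v, c v q : ℕ) : ℝ) / (8 * Λ) := by rw [Nat.cast_sum, Finset.sum_div]
      _ ≤ (Λ:ℝ) / (8 * Λ) := by gcongr; exact hΛ q
      _ = 1 / 8 := by field_simp
  obtain ⟨f, hf⟩ := cf_rosenfeld hK (H1 ∪ H2) (by
      intro J hJ
      rcases Finset.mem_union.1 hJ with h | h
      · obtain ⟨q1, _, h1⟩ := Finset.mem_biUnion.1 h
        obtain ⟨q2, h3, rfl⟩ := Finset.mem_image.1 h1
        exact ⟨q1, by simp⟩
      · obtain ⟨v, _, h1⟩ := Finset.mem_biUnion.1 h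
        obtain ⟨j, hj, h1⟩ := Finset.mem_biUnion.1 h1
        apply Finset.card_pos.1
        rw [(Finset.mem_powersetCard.1 h1).2]
        omega) (by
      intro q
      rw [← hm, Finset.filter_union]
      have := Finset.sum_union_inter (s₁ := H1.filter (fun J => q ∈ J))
        (s₂ := H2.filter (fun J => q ∈ J)) (f := fun J => (2 / m) ^ (J.card - 1))
      have h0 : 0 ≤ ∑ J ∈ H1.filter (fun J => q ∈ J) ∩ H2.filter (fun J => q ∈ J),
        (2 / m) ^ (J.card - 1) := Finset.sum_nonneg (fun J _ => hgnn J)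
      have := w1 q
      have := w2 q
      linarith)
  refine ⟨f, ?_, ?_⟩
  · intro i j hij hRij
    apply hf {(i, f i), (j, f j)}
    · apply Finset.mem_union_left
      refine Finset.mem_biUnion.2 ⟨(i, f i), Finset.mem_univ _, Finset.mem_image.2
        ⟨(j, f j), Finset.mem_filter.2 ⟨Finset.mem_univ _, hRij, ?_⟩, rfl⟩⟩
      intro h
      exact hij (congrArg Prod.fst h)
    · intro q hq
      rcases Finset.mem_insert.1 hq with rfl | h
      · rfl
      · rw [Finset.mem_singleton.1 h]
  · intro v
    have hcl : ∀ j ∈ Finset.range (p + 1),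
        (Finset.univ.filter (fun i => (i, f i) ∈ C v j)).card ≤ r v j := by
      intro j hj
      by_contra hcon
      push Not at hcon
      have h1 : r v j + 1 ≤ ((Finset.univ.filter (fun i => (i, f i) ∈ C v j)).image
          (fun i => (i, f i))).card := by
        rw [Finset.card_image_of_injective _ (fun a b h => congrArg Prod.fst h)]
        exact hcon
      obtain ⟨J, hJ1, hJ2⟩ := Finset.exists_subset_card_eq h1
      apply hf J
      · apply Finset.mem_union_right
        refine Finset.mem_biUnion.2 ⟨v, Finset.mem_univ _, Finset.mem_biUnion.2 ⟨j, hj,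
          Finset.mem_powersetCard.2 ⟨?_, hJ2⟩⟩⟩
        intro q hq
        obtain ⟨i, hi, rfl⟩ := Finset.mem_image.1 (hJ1 hq)
        exact (Finset.mem_filter.1 hi).2
      · intro q hq
        obtain ⟨i, hi, rfl⟩ := Finset.mem_image.1 (hJ1 hq)
        rfl
    have hload : ∑ i, c v (i, f i) ≤ ∑ j ∈ Finset.range (p + 1), r v j * 2 ^ (j + 1) := by
      have e1 : ∑ i, c v (i, f i) = ∑ i ∈ Finset.univ.filter (fun i => c v (i, f i) ≠ 0),
          c v (i, f i) := (Finset.sum_filter_ne_zero _).symm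
      rw [e1, ← Finset.sum_fiberwise_of_maps_to (t := Finset.range (p + 1))
        (g := fun i => Nat.log 2 (c v (i, f i)))]
      · apply Finset.sum_le_sum
        intro j hj
        have hb : ∀ i ∈ (Finset.univ.filter (fun i => c v (i, f i) ≠ 0)).filter
            (fun i => Nat.log 2 (c v (i, f i)) = j), c v (i, f i) ≤ 2 ^ (j + 1) := by
          intro i hi
          rw [← (Finset.mem_filter.1 hi).2]
          exact (Nat.lt_pow_succ_log_self (by norm_num) _).le
        refine (Finset.sum_le_card_nsmul _ _ _ hb).trans ?_
        rw [smul_eq_mul]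
        apply Nat.mul_le_mul_right
        refine le_trans (le_of_eq ?_) (hcl j hj)
        congr 1
        ext i
        simp [C]
      · intro i hi
        rw [Finset.mem_range]
        have := hlogp v (i, f i) (Finset.mem_filter.1 hi).2
        omega
    have hmass : ∑ j ∈ Finset.range (p + 1), (C v j).card * 2 ^ j ≤ ∑ q, c v q := by
      have e1 : ∑ q, c v q = ∑ q ∈ Finset.univ.filter (fun q => c v q ≠ 0),
          c v q := (Finset.sum_filter_ne_zero _).symm
      rw [e1, ← Finset.sum_fiberwise_of_maps_to (t := Finset.range (p + 1))
        (g := fun q => Nat.log 2 (c v q))]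
      · apply Finset.sum_le_sum
        intro j hj
        have hb : ∀ q ∈ (Finset.univ.filter (fun q => c v q ≠ 0)).filter
            (fun q => Nat.log 2 (c v q) = j), 2 ^ j ≤ c v q := by
          intro q hq
          rw [← (Finset.mem_filter.1 hq).2]
          exact Nat.pow_log_le_self 2 (Finset.mem_filter.1 (Finset.mem_filter.1 hq).1).2
        refine le_trans ?_ (Finset.card_nsmul_le_sum _ _ _ hb)
        rw [smul_eq_mul]
        apply Nat.mul_le_mul_right
        apply le_of_eq
        congr 1
        ext i
        simp [C]
      · intro i hi
        rw [Finset.mem_range]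
        have := hlogp v i (Finset.mem_filter.1 hi).2
        omega
    have hr : ∀ j ∈ Finset.range (p + 1), (r v j : ℝ) * 2 ^ (j + 1) ≤
        32 / m * (((C v j).card : ℝ) * 2 ^ j) + (1 + ((p:ℝ) - j)) * 2 ^ (j + 1) := by
      intro j hj
      have hjp : j ≤ p := by rw [Finset.mem_range] at hj; omega
      have h1 : (⌈16 * ((C v j).card : ℝ) / m⌉₊ : ℝ) < 16 * ((C v j).card : ℝ) / m + 1 :=
        Nat.ceil_lt_add_one (by positivity)
      have e : ((r v j : ℕ) : ℝ) = (⌈16 * ((C v j).card : ℝ) / m⌉₊ : ℝ) + ((p - j : ℕ) : ℝ) := by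
        exact Nat.cast_add _ _
      rw [Nat.cast_sub hjp] at e
      have e2 : 32 / m * (((C v j).card : ℝ) * 2 ^ j) + (1 + ((p:ℝ) - j)) * 2 ^ (j + 1) =
        (16 * ((C v j).card : ℝ) / m + 1 + ((p:ℝ) - j)) * 2 ^ (j + 1) := by
        rw [pow_succ]; field_simp; ring
      rw [e2, e]
      gcongr
    have h1 := (Nat.cast_le (α := ℝ)).2 hload
    push_cast at h1
    have h2 := Finset.sum_le_sum hr
    rw [Finset.sum_add_distrib, ← Finset.mul_sum] at h2
    have h3 := (Nat.cast_le (α := ℝ)).2 hmass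
    push_cast at h3
    have h4 := cf_geom p
    have h5 : (2:ℝ) ^ p ≤ 16 * Λ := by exact_mod_cast hp2
    have h6 := hΛ' v
    push_cast at h6 ⊢
    have h7 : 32 / m * ∑ j ∈ Finset.range (p + 1), ((C v j).card : ℝ) * 2 ^ j ≤ 32 / m * Λ' := by
      gcongr
      exact h3.trans h6
    have e3 : 32 / m * Λ' = 32 * Λ' / m := by ring
    linarith
end Spread
section Final

open Classical in
theorem cf_half {α β : Type*} [Fintype α] [Fintype β] (H : α → β → Prop) (S : Finset α)
    (T : Finset β) (G : ℝ) (hG : 0 < G) (hST : S.card = T.card)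
    (h1 : ∀ a ∈ S, G ≤ ((T.filter (fun b => H a b)).card : ℝ))
    (h2 : ∀ b ∈ T, G ≤ ((S.filter (fun a => H a b)).card : ℝ))
    (h3 : (((S ×ˢ T).filter (fun z => ¬ H z.1 z.2)).card : ℝ) < G ^ 2) :
    ∃ f : ↥S → β, Function.Injective f ∧ ∀ a, f a ∈ T ∧ H a (f a) := by
  have hall : ∀ X : Finset ↥S, X.card ≤ (X.biUnion (fun a => T.filter (fun b => H a b))).card := by
    intro X
    by_contra hcon
    push Not at hcon
    set N := X.biUnion (fun a => T.filter (fun b => H a b)) with hN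
    set X' := X.map (Function.Embedding.subtype _) with hX'
    have hX'c : X'.card = X.card := Finset.card_map _
    have hX'S : X' ⊆ S := by
      intro x hx
      obtain ⟨y, _, rfl⟩ := Finset.mem_map.1 hx
      exact y.2
    have hNT : N ⊆ T := by
      intro b hb
      obtain ⟨a, _, h⟩ := Finset.mem_biUnion.1 hb
      exact (Finset.mem_filter.1 h).1
    have hXS := Finset.card_le_card hX'S
    have c1 := Finset.card_sdiff_add_card_eq_card hNT
    have c2 := Finset.card_sdiff_add_card_eq_card hX'S
    have hTN : 0 < (T \ N).card := by omega
    obtain ⟨b, hb⟩ := Finset.card_pos.1 hTN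
    have hno : ∀ a ∈ X', ∀ b ∈ T \ N, ¬ H a b := by
      intro a ha b hb hH
      obtain ⟨y, hy, rfl⟩ := Finset.mem_map.1 ha
      obtain ⟨hbT, hbN⟩ := Finset.mem_sdiff.1 hb
      exact hbN (Finset.mem_biUnion.2 ⟨y, hy, Finset.mem_filter.2 ⟨hbT, hH⟩⟩)
    have d1 : (S.filter (fun a => H a b)).card ≤ (S \ X').card := by
      apply Finset.card_le_card
      intro a ha
      obtain ⟨h4, h5⟩ := Finset.mem_filter.1 ha
      exact Finset.mem_sdiff.2 ⟨h4, fun h6 => hno a h6 b hb h5⟩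
    have hXpos : 0 < X.card := by omega
    obtain ⟨x, hx⟩ := Finset.card_pos.1 hXpos
    have d2 : (T.filter (fun b => H x b)).card ≤ N.card :=
      Finset.card_le_card (Finset.subset_biUnion_of_mem (fun a : ↥S => T.filter (fun b => H a b)) hx)
    have e1 := h1 x x.2
    have e2 := h2 b (Finset.mem_sdiff.1 hb).1
    have f1 : G ≤ (X'.card : ℝ) := by
      have : ((T.filter (fun b => H x b)).card : ℝ) ≤ (X'.card : ℝ) := by
        exact_mod_cast (by omega : (T.filter (fun b => H x b)).card ≤ X'.card)
      linarith
    have f2 : G ≤ ((T \ N).card : ℝ) := by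
      have : ((S.filter (fun a => H a b)).card : ℝ) ≤ ((T \ N).card : ℝ) := by
        exact_mod_cast (by omega : (S.filter (fun a => H a b)).card ≤ (T \ N).card)
      linarith
    have f3 : (X' ×ˢ (T \ N)).card ≤ ((S ×ˢ T).filter (fun z => ¬ H z.1 z.2)).card := by
      apply Finset.card_le_card
      rintro ⟨a, b⟩ h
      obtain ⟨ha, hb⟩ := Finset.mem_product.1 h
      exact Finset.mem_filter.2 ⟨Finset.mem_product.2 ⟨hX'S ha, (Finset.mem_sdiff.1 hb).1⟩,
        hno a ha b hb⟩
    rw [Finset.card_product] at f3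
    have f4 : (X'.card : ℝ) * ((T \ N).card : ℝ) ≤
      (((S ×ˢ T).filter (fun z => ¬ H z.1 z.2)).card : ℝ) := by exact_mod_cast f3
    nlinarith
  obtain ⟨f, hf1, hf2⟩ := (Finset.all_card_le_biUnion_card_iff_exists_injective
    (fun a : ↥S => T.filter (fun b => H a b))).1 hall
  exact ⟨f, hf1, fun a => Finset.mem_filter.1 (hf2 a)⟩

open Classical in
set_option maxHeartbeats 1000000 in
theorem cf_final {α β : Type*} [Fintype α] [Fintype β] (E : α → β → Prop)
    (Fr : α × β → α × β → Prop) (n : ℕ) (hα : Fintype.card α = n) (hβ : Fintype.card β = n)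
    (μ g δ ε : ℝ)
    (hsym : ∀ e f, Fr e f → Fr f e)
    (hbd : ∀ e, ((Finset.univ.filter (fun f => Fr e f)).card : ℝ) ≤ μ * n)
    (A1 : Finset α) (B1 : Finset β) (d : ℕ) (Q : Fin d → α × β)
    (hQ1 : ∀ i j, (Q i).1 = (Q j).1 → i = j) (hQ2 : ∀ i j, (Q i).2 = (Q j).2 → i = j)
    (hQA : ∀ i, (Q i).1 ∈ A1) (hQB : ∀ i, (Q i).2 ∉ B1) (hQE : ∀ i, E (Q i).1 (Q i).2)
    (hQF : ∀ i j, i ≠ j → ¬ Fr (Q i) (Q j))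
    (hcard : A1.card = B1.card + d)
    (hda : ∀ a, 2 * g * n ≤ ((Finset.univ.filter (fun b => (a ∈ A1 ↔ b ∈ B1) ∧ E a b)).card : ℝ))
    (hdb : ∀ b, 2 * g * n ≤ ((Finset.univ.filter (fun a => (a ∈ A1 ↔ b ∈ B1) ∧ E a b)).card : ℝ))
    (hca : ∀ a, ((Finset.univ.filter (fun b => (a ∈ A1 ↔ b ∈ B1) ∧ ∃ i, Fr (Q i) (a, b))).card : ℝ)
      ≤ δ * n)
    (hcb : ∀ b, ((Finset.univ.filter (fun a => (a ∈ A1 ↔ b ∈ B1) ∧ ∃ i, Fr (Q i) (a, b))).card : ℝ)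
      ≤ δ * n)
    (hne : ((Finset.univ.filter (fun z : α × β => (z.1 ∈ A1 ↔ z.2 ∈ B1) ∧ ¬ E z.1 z.2)).card : ℝ)
      ≤ ε * n ^ 2)
    (hd : (d : ℝ) ≤ (g - δ) * n) (hg : 0 < g) (hg1 : g ≤ 1) (hμ : 0 ≤ μ)
    (hεδ : ε + δ ≤ g ^ 2 / 2) (hμg : μ ≤ (g ^ 2 / 2) ^ 2 / 256) (hn : 20 / (g ^ 2 / 2) ≤ n) :
    ∃ σ : α ≃ β, (∀ a, E a (σ a)) ∧ ∀ a a', a ≠ a' → ¬ Fr (a, σ a) (a', σ a') := by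
  have hnpos : (0:ℝ) < n := lt_of_lt_of_le (by positivity) hn
  let UA : Finset α := Finset.univ.image (fun i => (Q i).1)
  let UB : Finset β := Finset.univ.image (fun i => (Q i).2)
  have hUA : UA.card = d := by
    rw [Finset.card_image_of_injective _ (fun i j h => hQ1 i j h)]; simp
  have hUB : UB.card = d := by
    rw [Finset.card_image_of_injective _ (fun i j h => hQ2 i j h)]; simp
  obtain ⟨Hn, hHd⟩ : ∃ Hn : α → β → Prop, ∀ a b, Hn a b ↔ (a ∉ UA ∧ b ∉ UB ∧ E a b ∧
    (a ∈ A1 ↔ b ∈ B1) ∧ ∀ i, ¬ Fr (Q i) (a, b)) := ⟨_, fun _ _ => Iff.rfl⟩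
  obtain ⟨H, hH⟩ : ∃ H : α → β → Prop, ∀ a b, H a b ↔ ((∃ i, Q i = (a, b)) ∨ Hn a b) :=
    ⟨_, fun _ _ => Iff.rfl⟩
  have hHE : ∀ a b, H a b → E a b := by
    intro a b hab
    rcases (hH a b).1 hab with ⟨i, hi⟩ | h
    · have := hQE i; rw [hi] at this; exact this
    · exact ((hHd _ _).1 h).2.2.1
  have hHn : ∀ a b, H a b → (a ∉ UA ∨ b ∉ UB) → Hn a b := by
    intro a b hab0 hab
    rcases (hH a b).1 hab0 with ⟨i, hi⟩ | h
    · exfalso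
      rcases hab with h | h <;> apply h
      · exact Finset.mem_image.2 ⟨i, Finset.mem_univ _, by rw [hi]⟩
      · exact Finset.mem_image.2 ⟨i, Finset.mem_univ _, by rw [hi]⟩
    · exact h
  -- degrees
  have dega : ∀ a, a ∉ UA → g * n ≤ ((Finset.univ.filter (fun b => Hn a b)).card : ℝ) := by
    intro a ha
    have hsub : Finset.univ.filter (fun b => (a ∈ A1 ↔ b ∈ B1) ∧ E a b) ⊆
        (Finset.univ.filter (fun b => Hn a b)) ∪ (UB ∪
        Finset.univ.filter (fun b => (a ∈ A1 ↔ b ∈ B1) ∧ ∃ i, Fr (Q i) (a, b))) := by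
      intro b hb
      obtain ⟨h1, h2⟩ := (Finset.mem_filter.1 hb).2
      simp only [Finset.mem_union, Finset.mem_filter, Finset.mem_univ, true_and]
      by_cases h3 : b ∈ UB
      · exact Or.inr (Or.inl h3)
      by_cases h4 : ∃ i, Fr (Q i) (a, b)
      · exact Or.inr (Or.inr ⟨h1, h4⟩)
      · push Not at h4
        exact Or.inl ((hHd _ _).2 ⟨ha, h3, h2, h1, h4⟩)
    have h1 := (Finset.card_le_card hsub).trans ((Finset.card_union_le _ _).trans
      (Nat.add_le_add_left (Finset.card_union_le _ _) _))
    have h2 := (Nat.cast_le (α := ℝ)).2 h1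
    rw [Nat.cast_add, Nat.cast_add, hUB] at h2
    have h3 := hda a
    have h4 := hca a
    nlinarith
  have degb : ∀ b, b ∉ UB → g * n ≤ ((Finset.univ.filter (fun a => Hn a b)).card : ℝ) := by
    intro b hb
    have hsub : Finset.univ.filter (fun a => (a ∈ A1 ↔ b ∈ B1) ∧ E a b) ⊆
        (Finset.univ.filter (fun a => Hn a b)) ∪ (UA ∪
        Finset.univ.filter (fun a => (a ∈ A1 ↔ b ∈ B1) ∧ ∃ i, Fr (Q i) (a, b))) := by
      intro a ha
      obtain ⟨h1, h2⟩ := (Finset.mem_filter.1 ha).2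
      simp only [Finset.mem_union, Finset.mem_filter, Finset.mem_univ, true_and]
      by_cases h3 : a ∈ UA
      · exact Or.inr (Or.inl h3)
      by_cases h4 : ∃ i, Fr (Q i) (a, b)
      · exact Or.inr (Or.inr ⟨h1, h4⟩)
      · push Not at h4
        exact Or.inl ((hHd _ _).2 ⟨h3, hb, h2, h1, h4⟩)
    have h1 := (Finset.card_le_card hsub).trans ((Finset.card_union_le _ _).trans
      (Nat.add_le_add_left (Finset.card_union_le _ _) _))
    have h2 := (Nat.cast_le (α := ℝ)).2 h1
    rw [Nat.cast_add, Nat.cast_add, hUA] at h2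
    have h3 := hdb b
    have h4 := hcb b
    nlinarith
  -- non-edges
  let Bad : Finset (α × β) := Finset.univ.filter (fun z : α × β => z.1 ∉ UA ∧ z.2 ∉ UB ∧
    (z.1 ∈ A1 ↔ z.2 ∈ B1) ∧ ¬ Hn z.1 z.2)
  have hBad : (Bad.card : ℝ) ≤ g ^ 2 / 2 * n ^ 2 := by
    have hsub : Bad ⊆ (Finset.univ.filter (fun z : α × β => (z.1 ∈ A1 ↔ z.2 ∈ B1) ∧ ¬ E z.1 z.2)) ∪
        (Finset.univ : Finset α).biUnion (fun a => (Finset.univ.filter (fun b => (a ∈ A1 ↔ b ∈ B1) ∧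
          ∃ i, Fr (Q i) (a, b))).image (fun b => (a, b))) := by
      rintro ⟨a, b⟩ h
      obtain ⟨h1, h2, h3, h4⟩ := (Finset.mem_filter.1 h).2
      dsimp only at h1 h2 h3 h4
      by_cases h5 : E a b
      · apply Finset.mem_union_right
        refine Finset.mem_biUnion.2 ⟨a, Finset.mem_univ _, Finset.mem_image.2 ⟨b,
          Finset.mem_filter.2 ⟨Finset.mem_univ _, h3, ?_⟩, rfl⟩⟩
        by_contra h6
        push Not at h6
        exact h4 ((hHd _ _).2 ⟨h1, h2, h5, h3, h6⟩)
      · exact Finset.mem_union_left _ (Finset.mem_filter.2 ⟨Finset.mem_univ _, h3, h5⟩)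
    have h1 := (Finset.card_le_card hsub).trans (Finset.card_union_le _ _)
    have h2 := (Nat.cast_le (α := ℝ)).2 h1
    rw [Nat.cast_add] at h2
    have h3 : (((Finset.univ : Finset α).biUnion (fun a => (Finset.univ.filter
        (fun b => (a ∈ A1 ↔ b ∈ B1) ∧
          ∃ i, Fr (Q i) (a, b))).image (fun b => (a, b)))).card : ℝ) ≤ n * (δ * n) := by
      refine (Nat.cast_le (α := ℝ)).2 Finset.card_biUnion_le |>.trans ?_
      rw [Nat.cast_sum]
      have : ∀ a ∈ (Finset.univ : Finset α), (((Finset.univ.filter (fun b => (a ∈ A1 ↔ b ∈ B1) ∧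
          ∃ i, Fr (Q i) (a, b))).image (fun b => (a, b))).card : ℝ) ≤ δ * n := by
        intro a _
        refine le_trans ?_ (hca a)
        exact_mod_cast Finset.card_image_le
      have := Finset.sum_le_card_nsmul _ _ _ this
      rwa [Finset.card_univ, hα, nsmul_eq_mul] at this
    nlinarith [sq_nonneg (n:ℝ)]
  -- perfect matching
  have hhalf : ∀ (s : Prop) (S : Finset α) (T : Finset β), (∀ a, a ∈ S ↔ a ∉ UA ∧ (a ∈ A1 ↔ s)) →
      (∀ b, b ∈ T ↔ b ∉ UB ∧ (b ∈ B1 ↔ s)) → S.card = T.card →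
      ∃ f : ↥S → β, Function.Injective f ∧ ∀ a, f a ∈ T ∧ Hn a (f a) := by
    intro s S T hS hT hs
    apply cf_half Hn S T (g * n) (by positivity) hs
    · intro a ha
      obtain ⟨h1, h2⟩ := (hS a).1 ha
      refine (dega a h1).trans ?_
      refine (Nat.cast_le (α := ℝ)).2 (Finset.card_le_card ?_)
      intro b hb
      have hb := (Finset.mem_filter.1 hb).2
      have hb' := (hHd _ _).1 hb
      refine Finset.mem_filter.2 ⟨(hT b).2 ⟨hb'.2.1, ?_⟩, hb⟩
      rw [← hb'.2.2.2.1, h2]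
    · intro b hb
      obtain ⟨h1, h2⟩ := (hT b).1 hb
      refine (degb b h1).trans ?_
      refine (Nat.cast_le (α := ℝ)).2 (Finset.card_le_card ?_)
      intro a ha
      have ha := (Finset.mem_filter.1 ha).2
      have ha' := (hHd _ _).1 ha
      refine Finset.mem_filter.2 ⟨(hS a).2 ⟨ha'.1, ?_⟩, ha⟩
      rw [ha'.2.2.2.1, h2]
    · have hsub : (S ×ˢ T).filter (fun z => ¬ Hn z.1 z.2) ⊆ Bad := by
        rintro ⟨a, b⟩ h
        simp only [Finset.mem_filter, Finset.mem_product, hS, hT] at h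
        refine Finset.mem_filter.2 ⟨Finset.mem_univ _, h.1.1.1, h.1.2.1, ?_, h.2⟩
        rw [h.1.1.2, h.1.2.2]
      have h1 := (Nat.cast_le (α := ℝ)).2 (Finset.card_le_card hsub)
      have h2 : 0 < (g * n) ^ 2 := by positivity
      refine lt_of_le_of_lt (h1.trans hBad) ?_
      nlinarith
  have hUAs : UA ⊆ A1 := by
    intro a ha
    obtain ⟨i, _, rfl⟩ := Finset.mem_image.1 ha
    exact hQA i
  have hUBs : UB ⊆ B1ᶜ := by
    intro a ha
    obtain ⟨i, _, rfl⟩ := Finset.mem_image.1 ha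
    exact Finset.mem_compl.2 (hQB i)
  have hex : ∃ σ : α ≃ β, ∀ a, H a (σ a) := by
    have cA := Finset.card_sdiff_add_card_eq_card hUAs
    have cB := Finset.card_sdiff_add_card_eq_card hUBs
    have cA2 := Finset.card_compl_add_card A1
    have cB2 := Finset.card_compl_add_card B1
    have mA : ∀ a, a ∈ A1 \ UA ↔ a ∉ UA ∧ (a ∈ A1 ↔ True) := by
      intro x; simp [and_comm]
    have mB : ∀ b, b ∈ B1 ↔ b ∉ UB ∧ (b ∈ B1 ↔ True) := by
      intro x
      simp only [iff_true]
      exact ⟨fun h1 => ⟨fun h2 => Finset.mem_compl.1 (hUBs h2) h1, h1⟩, fun h => h.2⟩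
    have mA2 : ∀ a, a ∈ A1ᶜ ↔ a ∉ UA ∧ (a ∈ A1 ↔ False) := by
      intro x
      simp only [iff_false, Finset.mem_compl]
      exact ⟨fun h1 => ⟨fun h2 => h1 (hUAs h2), h1⟩, fun h => h.2⟩
    have mB2 : ∀ b, b ∈ B1ᶜ \ UB ↔ b ∉ UB ∧ (b ∈ B1 ↔ False) := by
      intro x; simp [and_comm]
    obtain ⟨f1, hf1, hf1'⟩ := hhalf True (A1 \ UA) B1 mA mB (by omega)
    obtain ⟨f2, hf2, hf2'⟩ := hhalf False A1ᶜ (B1ᶜ \ UB) mA2 mB2 (by omega)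
    have hchoice : ∀ a, ∃ b, H a b ∧ ((∃ i, Q i = (a, b)) ∨
        (∃ h, b = f1 ⟨a, h⟩) ∨ (∃ h, b = f2 ⟨a, h⟩)) := by
      intro a
      by_cases h1 : a ∈ UA
      · obtain ⟨i, _, rfl⟩ := Finset.mem_image.1 h1
        exact ⟨(Q i).2, (hH _ _).2 (Or.inl ⟨i, rfl⟩), Or.inl ⟨i, rfl⟩⟩
      by_cases h2 : a ∈ A1
      · have hm : a ∈ A1 \ UA := by simp [h1, h2]
        exact ⟨f1 ⟨a, hm⟩, (hH _ _).2 (Or.inr (hf1' ⟨a, hm⟩).2), Or.inr (Or.inl ⟨hm, rfl⟩)⟩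
      · have hm : a ∈ A1ᶜ := by simp [h2]
        exact ⟨f2 ⟨a, hm⟩, (hH _ _).2 (Or.inr (hf2' ⟨a, hm⟩).2), Or.inr (Or.inr ⟨hm, rfl⟩)⟩
    choose f hfH hf using hchoice
    have hinj : Function.Injective f := by
      intro a a' haa
      have t1 : ∀ x h, f1 ⟨x, h⟩ ∉ UB ∧ f1 ⟨x, h⟩ ∈ B1 := by
        intro x h
        have := (mB _).1 (hf1' ⟨x, h⟩).1
        simpa using this
      have t2 : ∀ x h, f2 ⟨x, h⟩ ∉ UB ∧ f2 ⟨x, h⟩ ∉ B1 := by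
        intro x h
        have := (mB2 _).1 (hf2' ⟨x, h⟩).1
        simpa using this
      have t0 : ∀ i, (Q i).2 ∈ UB := fun i => Finset.mem_image.2 ⟨i, Finset.mem_univ _, rfl⟩
      have hfa := hf a
      have hfa' := hf a'
      rw [← haa] at hfa'
      rcases hfa with ⟨i, hi⟩ | ⟨h, hi⟩ | ⟨h, hi⟩ <;>
        rcases hfa' with ⟨j, hj⟩ | ⟨k, hj⟩ | ⟨k, hj⟩
      · have : i = j := hQ2 i j (by rw [hi, hj])
        subst this
        rw [hi] at hj
        exact congrArg Prod.fst hj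
      · have := t0 i; rw [hi] at this; dsimp only at this; rw [hj] at this
        exact absurd this (t1 _ _).1
      · have := t0 i; rw [hi] at this; dsimp only at this; rw [hj] at this
        exact absurd this (t2 _ _).1
      · have := t0 j; rw [hj] at this; dsimp only at this; rw [hi] at this
        exact absurd this (t1 _ _).1
      · rw [hi] at hj
        exact congrArg Subtype.val (hf1 hj)
      · have := (t1 _ h).2; rw [← hi, hj] at this
        exact absurd this (t2 _ _).2
      · have := t0 j; rw [hj] at this; dsimp only at this; rw [hi] at this
        exact absurd this (t2 _ _).1
      · have := (t1 _ k).2; rw [← hj, hi] at this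
        exact absurd this (t2 _ _).2
      · rw [hi] at hj
        exact congrArg Subtype.val (hf2 hj)
    have hbij : Function.Bijective f :=
      (Fintype.bijective_iff_injective_and_card f).2 ⟨hinj, by rw [hα, hβ]⟩
    exact ⟨Equiv.ofBijective f hbij, fun a => hfH a⟩
  obtain ⟨σ, h1, h2⟩ := cf_main H (fun a => a ∉ UA) Fr n μ (g ^ 2 / 2) (by rw [hα]) hsym hbd
    (by positivity) (by nlinarith) hμg hμ hn (by
      intro σ hσ a ha
      have hσa := (hHd _ _).1 (hHn _ _ (hσ a) (Or.inl ha))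
      let X : Finset α := Finset.univ.filter (fun x => Hn a (σ x))
      let Y : Finset α := Finset.univ.filter (fun y => Hn y (σ a))
      have hX : g * n ≤ (X.card : ℝ) := by
        refine (dega a ha).trans ?_
        have : Finset.univ.filter (fun b => Hn a b) ⊆ X.image σ := by
          intro b hb
          refine Finset.mem_image.2 ⟨σ.symm b, Finset.mem_filter.2 ⟨Finset.mem_univ _, ?_⟩, by simp⟩
          simpa using (Finset.mem_filter.1 hb).2
        exact_mod_cast (Finset.card_le_card this).trans Finset.card_image_le
      have hY : g * n ≤ (Y.card : ℝ) := degb (σ a) hσa.2.1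
      have hcov : X ×ˢ Y ⊆ (Finset.univ.filter (fun z : α × α => H a (σ z.1) ∧ H z.1 (σ z.2) ∧
          H z.2 (σ a))) ∪ Bad.image (fun z => (z.1, σ.symm z.2)) := by
        rintro ⟨x, y⟩ hxy
        obtain ⟨hx, hy⟩ := Finset.mem_product.1 hxy
        have hx := (Finset.mem_filter.1 hx).2
        have hy := (Finset.mem_filter.1 hy).2
        dsimp only at hx hy
        by_cases h : Hn x (σ y)
        · exact Finset.mem_union_left _ (Finset.mem_filter.2 ⟨Finset.mem_univ _,
            (hH _ _).2 (Or.inr hx), (hH _ _).2 (Or.inr h), (hH _ _).2 (Or.inr hy)⟩)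
        · have hx := (hHd _ _).1 hx
          have hy := (hHd _ _).1 hy
          apply Finset.mem_union_right
          refine Finset.mem_image.2 ⟨(x, σ y), Finset.mem_filter.2 ⟨Finset.mem_univ _, ?_⟩, by simp⟩
          have hxx := (hHd _ _).1 (hHn _ _ (hσ x) (Or.inr hx.2.1))
          have hyy := (hHd _ _).1 (hHn _ _ (hσ y) (Or.inl hy.1))
          refine ⟨hxx.1, hyy.2.1, ?_, h⟩
          have q1 := hxx.2.2.2.1
          have q2 := hyy.2.2.2.1
          have q3 := hx.2.2.2.1
          have q4 := hy.2.2.2.1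
          have q5 := hσa.2.2.2.1
          exact q1.trans (q3.symm.trans (q5.trans (q4.symm.trans q2)))
      have c1 := (Finset.card_le_card hcov).trans (Finset.card_union_le _ _)
      have c2 : (Bad.image (fun z => (z.1, σ.symm z.2))).card ≤ Bad.card := Finset.card_image_le
      rw [Finset.card_product] at c1
      have c3 := (Nat.cast_le (α := ℝ)).2 (c1.trans (Nat.add_le_add_left c2 _))
      rw [Nat.cast_add, Nat.cast_mul] at c3
      have c0 : (0:ℝ) ≤ g * n := mul_nonneg hg.le hnpos.le
      have c4 : (g * n) * (g * n) ≤ (X.card : ℝ) * (Y.card : ℝ) :=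
        mul_le_mul hX hY c0 (c0.trans hX)
      clear_value X Y Bad
      have c5 : (g * n) * (g * n) - g ^ 2 / 2 * n ^ 2 = g ^ 2 / 2 * (n:ℝ) ^ 2 := by ring
      rw [← c5]
      refine sub_le_iff_le_add.2 (c4.trans (c3.trans ?_))
      exact add_le_add le_rfl hBad) (by
      intro a b hab hPa a' b' hab' hne' hF
      rw [not_not] at hPa
      rcases (hH _ _).1 hab with ⟨i, hi⟩ | h
      swap
      · exact ((hHd _ _).1 h).1 hPa
      rcases (hH _ _).1 hab' with ⟨j, hj⟩ | h
      · rw [← hi, ← hj] at hF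
        refine hQF i j ?_ hF
        rintro rfl
        rw [hi] at hj
        exact hne' (congrArg Prod.fst hj)
      · rw [← hi] at hF
        exact ((hHd _ _).1 h).2.2.2.2 i hF) hex
  exact ⟨σ, fun a => hHE _ _ (h1 a), h2⟩

open Classical in
theorem cf_nonext {α β : Type*} [Fintype α] [Fintype β] (E : α → β → Prop)
    (Fr : α × β → α × β → Prop) (n : ℕ) (hα : Fintype.card α = n) (hβ : Fintype.card β = n)
    (μ ε : ℝ)
    (hsym : ∀ e f, Fr e f → Fr f e)
    (hbd : ∀ e, ((Finset.univ.filter (fun f => Fr e f)).card : ℝ) ≤ μ * n)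
    (hda : ∀ a, (n:ℝ) / 2 ≤ ((Finset.univ.filter (fun b => E a b)).card : ℝ))
    (hdb : ∀ b, (n:ℝ) / 2 ≤ ((Finset.univ.filter (fun a => E a b)).card : ℝ))
    (hne : ∀ (S : Finset α) (T : Finset β), (n:ℝ) / 2 ≤ S.card → (n:ℝ) / 2 ≤ T.card →
      ε * n ^ 2 ≤ (((S ×ˢ T).filter (fun z => E z.1 z.2)).card : ℝ))
    (hε : 0 < ε) (hε1 : ε ≤ 1) (hμ : 0 ≤ μ) (hμε : μ ≤ ε ^ 2 / 256) (hn : 20 / ε ≤ n) :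
    ∃ σ : α ≃ β, (∀ a, E a (σ a)) ∧ ∀ a a', a ≠ a' → ¬ Fr (a, σ a) (a', σ a') := by
  apply cf_main E (fun _ => True) Fr n μ ε (by rw [hα]) hsym hbd hε hε1 hμε hμ hn
  · intro σ hσ a _
    let X : Finset α := Finset.univ.filter (fun x => E a (σ x))
    let Y : Finset β := (Finset.univ.filter (fun y => E y (σ a))).image σ
    have hX : (n:ℝ) / 2 ≤ (X.card : ℝ) := by
      refine (hda a).trans ?_
      have : Finset.univ.filter (fun b => E a b) ⊆ X.image σ := by
        intro b hb
        refine Finset.mem_image.2 ⟨σ.symm b, Finset.mem_filter.2 ⟨Finset.mem_univ _, ?_⟩, by simp⟩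
        simpa using (Finset.mem_filter.1 hb).2
      exact_mod_cast (Finset.card_le_card this).trans Finset.card_image_le
    have hY : (n:ℝ) / 2 ≤ (Y.card : ℝ) := by
      rw [Finset.card_image_of_injective _ σ.injective]
      exact hdb (σ a)
    refine (hne X Y hX hY).trans ?_
    have : ((X ×ˢ Y).filter (fun z => E z.1 z.2)) ⊆ (Finset.univ.filter (fun z : α × α =>
        E a (σ z.1) ∧ E z.1 (σ z.2) ∧ E z.2 (σ a))).image (fun z => (z.1, σ z.2)) := by
      rintro ⟨x, b⟩ h
      obtain ⟨h1, h2⟩ := Finset.mem_filter.1 h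
      obtain ⟨hx, hb⟩ := Finset.mem_product.1 h1
      obtain ⟨y, hy, rfl⟩ := Finset.mem_image.1 hb
      refine Finset.mem_image.2 ⟨(x, y), Finset.mem_filter.2 ⟨Finset.mem_univ _,
        (Finset.mem_filter.1 hx).2, h2, (Finset.mem_filter.1 hy).2⟩, rfl⟩
    exact_mod_cast (Finset.card_le_card this).trans Finset.card_image_le
  · intro a b _ h
    exact absurd trivial h
  · have hall : ∀ X : Finset α,
        X.card ≤ (X.biUnion (fun a => Finset.univ.filter (fun b => E a b))).card := by
      intro X
      by_contra hcon
      push Not at hcon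
      set N := X.biUnion (fun a => Finset.univ.filter (fun b => E a b)) with hN
      have c1 := Finset.card_compl_add_card N
      have c2 := Finset.card_compl_add_card X
      rw [hα] at c2
      rw [hβ] at c1
      obtain ⟨x, hx⟩ := Finset.card_pos.1 (show 0 < X.card by omega)
      obtain ⟨b, hb⟩ := Finset.card_pos.1 (show 0 < Nᶜ.card by omega)
      have d2 : (Finset.univ.filter (fun b => E x b)).card ≤ N.card :=
        Finset.card_le_card (Finset.subset_biUnion_of_mem
          (fun a => Finset.univ.filter (fun b => E a b)) hx)
      have d1 : (Finset.univ.filter (fun a => E a b)).card ≤ Xᶜ.card := by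
        apply Finset.card_le_card
        intro a ha
        rw [Finset.mem_compl]
        intro hx
        exact Finset.mem_compl.1 hb (Finset.mem_biUnion.2 ⟨a, hx, Finset.mem_filter.2
          ⟨Finset.mem_univ _, (Finset.mem_filter.1 ha).2⟩⟩)
      have e1 := hda x
      have e2 := hdb b
      have f : (Finset.univ.filter (fun b => E x b)).card +
        (Finset.univ.filter (fun a => E a b)).card + 1 ≤ n := by omega
      have f' := (Nat.cast_le (α := ℝ)).2 f
      push_cast at f'
      linarith
    obtain ⟨f, hf1, hf2⟩ := (Finset.all_card_le_biUnion_card_iff_exists_injective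
      (fun a : α => Finset.univ.filter (fun b => E a b))).1 hall
    have hbij : Function.Bijective f :=
      (Fintype.bijective_iff_injective_and_card f).2 ⟨hf1, by rw [hα, hβ]⟩
    exact ⟨Equiv.ofBijective f hbij, fun a => (Finset.mem_filter.1 (hf2 a)).2⟩
end Final
section Core

theorem cf_count_left {α β : Type*} [Fintype α] [Fintype β] (P : α → β → Prop)
    [DecidablePred fun z : α × β => P z.1 z.2] [∀ a, DecidablePred fun b => P a b] :
    (Finset.univ.filter (fun z : α × β => P z.1 z.2)).card =
      ∑ a, (Finset.univ.filter (fun b => P a b)).card := by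
  simp only [Finset.card_filter, Fintype.sum_prod_type]

theorem cf_count_right {α β : Type*} [Fintype α] [Fintype β] (P : α → β → Prop)
    [DecidablePred fun z : α × β => P z.1 z.2] [∀ b, DecidablePred fun a => P a b] :
    (Finset.univ.filter (fun z : α × β => P z.1 z.2)).card =
      ∑ b, (Finset.univ.filter (fun a => P a b)).card := by
  simp only [Finset.card_filter, Fintype.sum_prod_type_right]

open Classical in
theorem cf_cross {α β : Type*} [Fintype α] [Fintype β] (E : α → β → Prop)
    (n : ℕ) (hα : Fintype.card α = n) (hβ : Fintype.card β = n)
    (hda : ∀ a, (n:ℝ) / 2 ≤ ((Finset.univ.filter (fun b => E a b)).card : ℝ))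
    (hdb : ∀ b, (n:ℝ) / 2 ≤ ((Finset.univ.filter (fun a => E a b)).card : ℝ))
    (A1 : Finset α) (B1 : Finset β) (d : ℕ) (hcard : A1.card = B1.card + d)
    (hA1 : (n:ℝ) / 4 ≤ A1.card) (hB2 : (n:ℝ) / 4 ≤ (B1ᶜ).card) :
    (d:ℝ) * (n / 8) ≤ ((Finset.univ.filter
      (fun z : α × β => z.1 ∈ A1 ∧ z.2 ∉ B1 ∧ E z.1 z.2)).card : ℝ) := by
  have hnn : (0:ℝ) ≤ n := by positivity
  have hcardr : (A1.card : ℝ) = B1.card + d := by exact_mod_cast hcard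
  have hA2 := Finset.card_compl_add_card A1
  have hA2r : ((A1ᶜ).card : ℝ) + A1.card = n := by rw [hα] at hA2; exact_mod_cast hA2
  by_cases hc : (d:ℝ) / 2 ≤ n / 2 - B1.card
  · rw [cf_count_left (fun a b => a ∈ A1 ∧ b ∉ B1 ∧ E a b)]
    have h1 : ∀ a ∈ A1, (d:ℝ) / 2 ≤
        ((Finset.univ.filter (fun b => a ∈ A1 ∧ b ∉ B1 ∧ E a b)).card : ℝ) := by
      intro a ha
      have hsub : Finset.univ.filter (fun b => E a b) ⊆
          (Finset.univ.filter (fun b => a ∈ A1 ∧ b ∉ B1 ∧ E a b)) ∪ B1 := by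
        intro b hb
        have hb := (Finset.mem_filter.1 hb).2
        by_cases h : b ∈ B1
        · exact Finset.mem_union_right _ h
        · exact Finset.mem_union_left _ (Finset.mem_filter.2 ⟨Finset.mem_univ _, ha, h, hb⟩)
      have h2 := (Nat.cast_le (α := ℝ)).2 ((Finset.card_le_card hsub).trans
        (Finset.card_union_le _ _))
      rw [Nat.cast_add] at h2
      have := hda a
      linarith
    have h2 := Finset.card_nsmul_le_sum _ _ _ h1
    rw [nsmul_eq_mul] at h2
    have h3 : ∑ a ∈ A1, ((Finset.univ.filter (fun b => a ∈ A1 ∧ b ∉ B1 ∧ E a b)).card : ℝ) ≤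
        ∑ a, ((Finset.univ.filter (fun b => a ∈ A1 ∧ b ∉ B1 ∧ E a b)).card : ℝ) :=
      Finset.sum_le_sum_of_subset_of_nonneg (Finset.subset_univ _) (fun _ _ _ => by positivity)
    rw [Nat.cast_sum]
    have hd0 : (0:ℝ) ≤ d := by positivity
    nlinarith
  · push Not at hc
    rw [cf_count_right (fun a b => a ∈ A1 ∧ b ∉ B1 ∧ E a b)]
    have h1 : ∀ b ∈ B1ᶜ, (d:ℝ) / 2 ≤
        ((Finset.univ.filter (fun a => a ∈ A1 ∧ b ∉ B1 ∧ E a b)).card : ℝ) := by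
      intro b hb
      have hb := Finset.mem_compl.1 hb
      have hsub : Finset.univ.filter (fun a => E a b) ⊆
          (Finset.univ.filter (fun a => a ∈ A1 ∧ b ∉ B1 ∧ E a b)) ∪ A1ᶜ := by
        intro a ha
        have ha := (Finset.mem_filter.1 ha).2
        by_cases h : a ∈ A1
        · exact Finset.mem_union_left _ (Finset.mem_filter.2 ⟨Finset.mem_univ _, h, hb, ha⟩)
        · exact Finset.mem_union_right _ (Finset.mem_compl.2 h)
      have h2 := (Nat.cast_le (α := ℝ)).2 ((Finset.card_le_card hsub).trans
        (Finset.card_union_le _ _))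
      rw [Nat.cast_add] at h2
      have := hdb b
      linarith
    have h2 := Finset.card_nsmul_le_sum _ _ _ h1
    rw [nsmul_eq_mul] at h2
    have h3 : ∑ b ∈ B1ᶜ, ((Finset.univ.filter (fun a => a ∈ A1 ∧ b ∉ B1 ∧ E a b)).card : ℝ) ≤
        ∑ b, ((Finset.univ.filter (fun a => a ∈ A1 ∧ b ∉ B1 ∧ E a b)).card : ℝ) :=
      Finset.sum_le_sum_of_subset_of_nonneg (Finset.subset_univ _) (fun _ _ _ => by positivity)
    rw [Nat.cast_sum]
    have hd0 : (0:ℝ) ≤ d := by positivity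
    nlinarith

open Classical in
theorem cf_core {α β : Type*} [Fintype α] [Fintype β] (E : α → β → Prop)
    (Fr : α × β → α × β → Prop) (n : ℕ) (hα : Fintype.card α = n) (hβ : Fintype.card β = n)
    (μ g ε h : ℝ)
    (hsym : ∀ e f, Fr e f → Fr f e)
    (hbd : ∀ e, ((Finset.univ.filter (fun f => Fr e f)).card : ℝ) ≤ μ * n)
    (hda : ∀ a, (n:ℝ) / 2 ≤ ((Finset.univ.filter (fun b => E a b)).card : ℝ))
    (hdb : ∀ b, (n:ℝ) / 2 ≤ ((Finset.univ.filter (fun a => E a b)).card : ℝ))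
    (A1 : Finset α) (B1 : Finset β) (d : ℕ) (hcard : A1.card = B1.card + d)
    (hA1 : (n:ℝ) / 4 ≤ A1.card) (hB2 : (n:ℝ) / 4 ≤ (B1ᶜ).card)
    (hoa : ∀ a, 2 * g * n ≤ ((Finset.univ.filter (fun b => (a ∈ A1 ↔ b ∈ B1) ∧ E a b)).card : ℝ))
    (hob : ∀ b, 2 * g * n ≤ ((Finset.univ.filter (fun a => (a ∈ A1 ↔ b ∈ B1) ∧ E a b)).card : ℝ))
    (hne : ((Finset.univ.filter (fun z : α × β => (z.1 ∈ A1 ↔ z.2 ∈ B1) ∧ ¬ E z.1 z.2)).card : ℝ)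
      ≤ ε * n ^ 2)
    (hcra : d ≠ 0 → ∀ a ∈ A1, ((Finset.univ.filter (fun b => b ∉ B1 ∧ E a b)).card : ℝ) ≤ h * n)
    (hcrb : d ≠ 0 → ∀ b, b ∉ B1 →
      ((Finset.univ.filter (fun a => a ∈ A1 ∧ E a b)).card : ℝ) ≤ h * n)
    (hd : (d : ℝ) ≤ (g - 672 * μ) * n) (hg : 0 < g) (hg1 : g ≤ 1) (hμ : 0 ≤ μ)
    (hεδ : ε + 672 * μ ≤ g ^ 2 / 2) (hμg : μ ≤ (g ^ 2 / 2) ^ 2 / 256)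
    (hn : 20 / (g ^ 2 / 2) ≤ n) (hμn : 1 ≤ μ * n) (hn72 : 72 ≤ n)
    (hhμ : 2 * h + μ ≤ 1 / 72) :
    ∃ σ : α ≃ β, (∀ a, E a (σ a)) ∧ ∀ a a', a ≠ a' → ¬ Fr (a, σ a) (a', σ a') := by
  have hcr := cf_cross E n hα hβ hda hdb A1 B1 d hcard hA1 hB2
  set cross := Finset.univ.filter (fun z : α × β => z.1 ∈ A1 ∧ z.2 ∉ B1 ∧ E z.1 z.2) with hcross
  have hnr : (72:ℝ) ≤ n := by exact_mod_cast hn72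
  obtain ⟨m, hm⟩ : ∃ m, m = n / 8 := ⟨_, rfl⟩
  have hm1 : (m:ℝ) ≤ n / 8 := by rw [hm]; exact Nat.cast_div_le
  have hm2 : (n:ℝ) / 9 ≤ m := by
    have : n ≤ 9 * m := by omega
    have : (n:ℝ) ≤ 9 * m := by exact_mod_cast this
    linarith
  have hmpos : (0:ℝ) < m := by linarith
  have hle : d * m ≤ cross.card := by
    have : (d:ℝ) * m ≤ cross.card := le_trans (by gcongr) hcr
    exact_mod_cast this
  obtain ⟨e0⟩ : Nonempty ((Fin d × Fin m) ↪ ↥cross) :=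
    Function.Embedding.nonempty_of_card_le (by simpa using hle)
  let e : Fin d × Fin m → α × β := fun q => (e0 q).1
  have he : Function.Injective e := fun x y hxy => e0.injective (Subtype.ext hxy)
  have hecr : ∀ q, (e q).1 ∈ A1 ∧ (e q).2 ∉ B1 ∧ E (e q).1 (e q).2 := by
    intro q
    exact (Finset.mem_filter.1 (e0 q).2).2
  clear_value e
  have hd0 : ∀ q : Fin d × Fin m, d ≠ 0 := by
    rintro ⟨i, _⟩ hd
    subst hd
    exact i.elim0
  let ca : α → Fin d × Fin m → ℕ := fun a q =>
    (Finset.univ.filter (fun b => (a ∈ A1 ↔ b ∈ B1) ∧ Fr (e q) (a, b))).card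
  let cb : β → Fin d × Fin m → ℕ := fun b q =>
    (Finset.univ.filter (fun a => (a ∈ A1 ↔ b ∈ B1) ∧ Fr (e q) (a, b))).card
  have hswap : ∀ (P : Fin d × Fin m → Prop) [DecidablePred P] (S : Finset (α × β)), (∀ q, P q → e q ∈ S) →
      (Finset.univ.filter P).card ≤ S.card := by
    intro P _ S hPS
    apply Finset.card_le_card_of_injOn e
    · intro q hq
      exact hPS q (Finset.mem_filter.1 (Finset.mem_coe.1 hq)).2
    · exact he.injOn
  have hswap1 : ∀ (P : Fin d × Fin m → Prop) (S : Finset (α × β)), (∀ q, P q → e q ∈ S) →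
      (Finset.univ.filter P).card ≤ S.card := fun P S hPS => hswap P S hPS
  obtain ⟨f, hf1, hf2⟩ := cf_spread (V := α ⊕ β) (D := Fin d) (K := Fin m)
    (by simp; exact_mod_cast hmpos) (Sum.elim ca cb)
    (fun q q' => Fr (e q) (e q') ∨ (e q).1 = (e q').1 ∨ (e q).2 = (e q').2)
    (by
      rintro q q' (h1 | h1 | h1)
      · exact Or.inl (hsym _ _ h1)
      · exact Or.inr (Or.inl h1.symm)
      · exact Or.inr (Or.inr h1.symm))
    (by
      intro q
      obtain ⟨q1, q2, q3⟩ := hecr q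
      have b1 := hcra (hd0 q) (e q).1 q1
      have b2 := hcrb (hd0 q) (e q).2 q2
      have b3 := hbd (e q)
      have hc := hswap1 (fun q' => Fr (e q) (e q') ∨ (e q).1 = (e q').1 ∨ (e q).2 = (e q').2)
        ((Finset.univ.filter (fun z => Fr (e q) z)) ∪
          (((Finset.univ.filter (fun b => b ∉ B1 ∧ E (e q).1 b)).image (fun b => ((e q).1, b))) ∪
          ((Finset.univ.filter (fun a => a ∈ A1 ∧ E a (e q).2)).image (fun a => (a, (e q).2)))))
        (by
          intro q' hq'
          obtain ⟨r1, r2, r3⟩ := hecr q'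
          simp only [Finset.mem_union, Finset.mem_image, Finset.mem_filter, Finset.mem_univ,
            true_and]
          rcases hq' with h1 | h1 | h1
          · exact Or.inl h1
          · exact Or.inr (Or.inl ⟨(e q').2, ⟨r2, by rw [h1]; exact r3⟩, by rw [h1]⟩)
          · exact Or.inr (Or.inr ⟨(e q').1, ⟨r1, by rw [h1]; exact r3⟩, by rw [h1]⟩))
      have hc2 := hc.trans ((Finset.card_union_le _ _).trans (Nat.add_le_add_left
        ((Finset.card_union_le _ _).trans (Nat.add_le_add Finset.card_image_le
          Finset.card_image_le)) _))
      have hc3 := (Nat.cast_le (α := ℝ)).2 hc2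
      rw [Nat.cast_add, Nat.cast_add] at hc3
      rw [Fintype.card_fin]
      have : (2 * h + μ) * n ≤ 1 / 72 * n := by gcongr
      have hfin := hc3.trans (b := _) (c := (m:ℝ) / 8) (by linarith)
      exact hfin)
    (⌊2 * (μ * n)⌋₊ + 1) (n * (μ * n)) (Nat.succ_pos _)
    (by
      intro q
      rw [Fintype.sum_sum_type]
      simp only [Sum.elim_inl, Sum.elim_inr]
      have e1 := cf_count_left (fun a b => (a ∈ A1 ↔ b ∈ B1) ∧ Fr (e q) (a, b))
      have e2 := cf_count_right (fun a b => (a ∈ A1 ↔ b ∈ B1) ∧ Fr (e q) (a, b))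
      have e3 : (Finset.univ.filter (fun z : α × β => (z.1 ∈ A1 ↔ z.2 ∈ B1) ∧
          Fr (e q) (z.1, z.2))).card ≤ (Finset.univ.filter (fun z => Fr (e q) z)).card := by
        apply Finset.card_le_card
        intro z hz
        exact Finset.mem_filter.2 ⟨Finset.mem_univ _, (Finset.mem_filter.1 hz).2.2⟩
      have e4 := ((Nat.cast_le (α := ℝ)).2 e3).trans (hbd (e q))
      have : ((∑ a, ca a q + ∑ b, cb b q : ℕ) : ℝ) ≤ 2 * (μ * n) := by
        rw [Nat.cast_add]
        have f1 : ((∑ a, ca a q : ℕ) : ℝ) ≤ μ * n := by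
          simp only [ca]; rw [← e1]; exact e4
        have f2 : ((∑ b, cb b q : ℕ) : ℝ) ≤ μ * n := by
          simp only [cb]; rw [← e2]; exact e4
        linarith
      exact (Nat.le_floor this).trans (Nat.le_succ _))
    (by
      rintro (a | b)
      · simp only [Sum.elim_inl, ca]
        have e1 := cf_count_right (fun (b : β) (q : Fin d × Fin m) =>
          (a ∈ A1 ↔ b ∈ B1) ∧ Fr (e q) (a, b))
        have e2 := cf_count_left (fun (b : β) (q : Fin d × Fin m) =>
          (a ∈ A1 ↔ b ∈ B1) ∧ Fr (e q) (a, b))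
        rw [← e1, e2, Nat.cast_sum]
        have : ∀ b ∈ (Finset.univ : Finset β), ((Finset.univ.filter (fun q : Fin d × Fin m =>
            (a ∈ A1 ↔ b ∈ B1) ∧ Fr (e q) (a, b))).card : ℝ) ≤ μ * n := by
          intro b _
          refine le_trans ?_ (hbd (a, b))
          refine (Nat.cast_le (α := ℝ)).2 (hswap _ _ ?_)
          intro q hq
          exact Finset.mem_filter.2 ⟨Finset.mem_univ _, hsym _ _ hq.2⟩
        have := Finset.sum_le_card_nsmul _ _ _ this
        rwa [Finset.card_univ, hβ, nsmul_eq_mul] at this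
      · simp only [Sum.elim_inr, cb]
        have e1 := cf_count_right (fun (a : α) (q : Fin d × Fin m) =>
          (a ∈ A1 ↔ b ∈ B1) ∧ Fr (e q) (a, b))
        have e2 := cf_count_left (fun (a : α) (q : Fin d × Fin m) =>
          (a ∈ A1 ↔ b ∈ B1) ∧ Fr (e q) (a, b))
        rw [← e1, e2, Nat.cast_sum]
        have : ∀ a ∈ (Finset.univ : Finset α), ((Finset.univ.filter (fun q : Fin d × Fin m =>
            (a ∈ A1 ↔ b ∈ B1) ∧ Fr (e q) (a, b))).card : ℝ) ≤ μ * n := by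
          intro a _
          refine le_trans ?_ (hbd (a, b))
          refine (Nat.cast_le (α := ℝ)).2 (hswap _ _ ?_)
          intro q hq
          exact Finset.mem_filter.2 ⟨Finset.mem_univ _, hsym _ _ hq.2⟩
        have := Finset.sum_le_card_nsmul _ _ _ this
        rwa [Finset.card_univ, hα, nsmul_eq_mul] at this)
  have hload : 32 * (n * (μ * n)) / (Fintype.card (Fin m) : ℝ) +
      128 * ((⌊2 * (μ * n)⌋₊ + 1 : ℕ) : ℝ) ≤ 672 * μ * n := by
    rw [Fintype.card_fin]
    have f1 : ((⌊2 * (μ * n)⌋₊ : ℕ) : ℝ) ≤ 2 * (μ * n) := Nat.floor_le (by positivity)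
    have f2 : 32 * (n * (μ * n)) / (m : ℝ) ≤ 288 * (μ * n) := by
      rw [div_le_iff₀ hmpos]
      have : 0 ≤ μ * n := by positivity
      nlinarith
    push_cast
    nlinarith
  apply cf_final E Fr n hα hβ μ g (672 * μ) ε hsym hbd A1 B1 d (fun i => e (i, f i)) ?_ ?_
    (fun i => (hecr _).1) (fun i => (hecr _).2.1) (fun i => (hecr _).2.2) ?_ hcard hoa hob ?_ ?_
    hne hd hg hg1 hμ hεδ hμg hn
  · intro i j hij
    by_contra hcon
    exact hf1 i j hcon (Or.inr (Or.inl hij))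
  · intro i j hij
    by_contra hcon
    exact hf1 i j hcon (Or.inr (Or.inr hij))
  · intro i j hij hF
    exact hf1 i j hij (Or.inl hF)
  · intro a
    refine le_trans ?_ ((hf2 (Sum.inl a)).trans hload)
    refine (Nat.cast_le (α := ℝ)).2 ?_
    simp only [Sum.elim_inl, ca]
    have e1 : Finset.univ.filter (fun b => (a ∈ A1 ↔ b ∈ B1) ∧ ∃ i, Fr (e (i, f i)) (a, b)) ⊆
        Finset.univ.biUnion (fun i => Finset.univ.filter
          (fun b => (a ∈ A1 ↔ b ∈ B1) ∧ Fr (e (i, f i)) (a, b))) := by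
      intro b hb
      obtain ⟨h1, i, h2⟩ := (Finset.mem_filter.1 hb).2
      exact Finset.mem_biUnion.2 ⟨i, Finset.mem_univ _, Finset.mem_filter.2
        ⟨Finset.mem_univ _, h1, h2⟩⟩
    exact (Finset.card_le_card e1).trans Finset.card_biUnion_le
  · intro b
    refine le_trans ?_ ((hf2 (Sum.inr b)).trans hload)
    refine (Nat.cast_le (α := ℝ)).2 ?_
    simp only [Sum.elim_inr, cb]
    have e1 : Finset.univ.filter (fun a => (a ∈ A1 ↔ b ∈ B1) ∧ ∃ i, Fr (e (i, f i)) (a, b)) ⊆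
        Finset.univ.biUnion (fun i => Finset.univ.filter
          (fun a => (a ∈ A1 ↔ b ∈ B1) ∧ Fr (e (i, f i)) (a, b))) := by
      intro a ha
      obtain ⟨h1, i, h2⟩ := (Finset.mem_filter.1 ha).2
      exact Finset.mem_biUnion.2 ⟨i, Finset.mem_univ _, Finset.mem_filter.2
        ⟨Finset.mem_univ _, h1, h2⟩⟩
    exact (Finset.card_le_card e1).trans Finset.card_biUnion_le
end Core
section Ext

theorem cf_mark_left {α β : Type*} [Fintype α] [Fintype β] (P : α → β → Prop)
    [DecidablePred fun z : α × β => P z.1 z.2] [∀ a, DecidablePred fun b => P a b]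
    (C : Finset α) (c : ℝ)
    (h : ∀ a ∈ C, c ≤ ((Finset.univ.filter (fun b => P a b)).card : ℝ)) :
    (C.card : ℝ) * c ≤ ((Finset.univ.filter (fun z : α × β => P z.1 z.2)).card : ℝ) := by
  rw [cf_count_left P, Nat.cast_sum]
  have h2 := Finset.card_nsmul_le_sum _ _ _ h
  rw [nsmul_eq_mul] at h2
  exact h2.trans (Finset.sum_le_sum_of_subset_of_nonneg (Finset.subset_univ _)
    (fun _ _ _ => by positivity))

theorem cf_mark_right {α β : Type*} [Fintype α] [Fintype β] (P : α → β → Prop)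
    [DecidablePred fun z : α × β => P z.1 z.2] [∀ b, DecidablePred fun a => P a b]
    (C : Finset β) (c : ℝ)
    (h : ∀ b ∈ C, c ≤ ((Finset.univ.filter (fun a => P a b)).card : ℝ)) :
    (C.card : ℝ) * c ≤ ((Finset.univ.filter (fun z : α × β => P z.1 z.2)).card : ℝ) := by
  rw [cf_count_right P, Nat.cast_sum]
  have h2 := Finset.card_nsmul_le_sum _ _ _ h
  rw [nsmul_eq_mul] at h2
  exact h2.trans (Finset.sum_le_sum_of_subset_of_nonneg (Finset.subset_univ _)
    (fun _ _ _ => by positivity))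

theorem cf_cover2 {γ : Type*} [DecidableEq γ] (U V W : Finset γ) (h : ∀ x ∈ U, x ∈ V ∨ x ∈ W) :
    (U.card : ℝ) ≤ V.card + W.card := by
  have : U ⊆ V ∪ W := fun x hx => Finset.mem_union.2 (h x hx)
  exact_mod_cast (Finset.card_le_card this).trans (Finset.card_union_le _ _)

theorem cf_cover3 {γ : Type*} [DecidableEq γ] (U V W Z : Finset γ)
    (h : ∀ x ∈ U, x ∈ V ∨ x ∈ W ∨ x ∈ Z) :
    (U.card : ℝ) ≤ V.card + W.card + Z.card := by
  have h1 := cf_cover2 U V (W ∪ Z) (fun x hx => by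
    rcases h x hx with h | h | h
    · exact Or.inl h
    · exact Or.inr (Finset.mem_union_left _ h)
    · exact Or.inr (Finset.mem_union_right _ h))
  have h2 := cf_cover2 (W ∪ Z) W Z (fun x hx => Finset.mem_union.1 hx)
  linarith

open Classical in
theorem cf_ext_side {α β : Type*} [Fintype α] [Fintype β] (E : α → β → Prop)
    (n : ℕ) (hn0 : 0 < n) (hα : Fintype.card α = n) (ε : ℝ)
    (hdb : ∀ b, (n:ℝ) / 2 ≤ ((Finset.univ.filter (fun a => E a b)).card : ℝ))
    (S : Finset α) (T : Finset β) (hS : (n:ℝ) / 2 ≤ S.card) (hT : (n:ℝ) / 2 ≤ T.card)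
    (he : ((Finset.univ.filter (fun z : α × β => z.1 ∈ S ∧ z.2 ∈ T ∧ E z.1 z.2)).card : ℝ)
      ≤ ε * n ^ 2) :
    (S.card : ℝ) ≤ n / 2 + 2 * ε * n ∧
    ((Finset.univ.filter (fun z : α × β => z.1 ∉ S ∧ z.2 ∈ T ∧ ¬ E z.1 z.2)).card : ℝ)
      ≤ ε * n ^ 2 ∧
    ((Finset.univ.filter (fun a => a ∈ S ∧
      (n:ℝ) / 4 ≤ ((Finset.univ.filter (fun b => b ∈ T ∧ E a b)).card : ℝ))).card : ℝ)
      ≤ 4 * ε * n ∧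
    ((Finset.univ.filter (fun a => a ∉ S ∧
      ((Finset.univ.filter (fun b => b ∈ T ∧ E a b)).card : ℝ) < n / 4)).card : ℝ)
      ≤ 4 * ε * n := by
  have hnr : (0:ℝ) < n := by exact_mod_cast hn0
  obtain ⟨X, hX⟩ : ∃ X : ℝ, X = ((Finset.univ.filter
    (fun z : α × β => z.1 ∈ S ∧ z.2 ∈ T ∧ E z.1 z.2)).card : ℝ) := ⟨_, rfl⟩
  obtain ⟨Y, hY⟩ : ∃ Y : ℝ, Y = ((Finset.univ.filter
    (fun z : α × β => z.1 ∉ S ∧ z.2 ∈ T ∧ E z.1 z.2)).card : ℝ) := ⟨_, rfl⟩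
  obtain ⟨Z, hZ⟩ : ∃ Z : ℝ, Z = ((Finset.univ.filter
    (fun z : α × β => z.1 ∉ S ∧ z.2 ∈ T ∧ ¬ E z.1 z.2)).card : ℝ) := ⟨_, rfl⟩
  have hXY : (T.card : ℝ) * (n / 2) ≤ X + Y := by
    have h1 := cf_mark_right (fun a b => b ∈ T ∧ E a b) T ((n:ℝ) / 2) (by
      intro b hb
      refine (hdb b).trans ((Nat.cast_le (α := ℝ)).2 (Finset.card_le_card ?_))
      intro a ha
      exact Finset.mem_filter.2 ⟨Finset.mem_univ _, hb, (Finset.mem_filter.1 ha).2⟩)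
    refine h1.trans ?_
    rw [hX, hY]
    apply cf_cover2
    intro z hz
    have hz := (Finset.mem_filter.1 hz).2
    by_cases h : z.1 ∈ S
    · exact Or.inl (Finset.mem_filter.2 ⟨Finset.mem_univ _, h, hz⟩)
    · exact Or.inr (Finset.mem_filter.2 ⟨Finset.mem_univ _, h, hz⟩)
  have hYZ : Y + Z ≤ (n - S.card) * T.card := by
    have h1 : (Finset.univ.filter (fun z : α × β => z.1 ∉ S ∧ z.2 ∈ T ∧ E z.1 z.2)).card +
      (Finset.univ.filter (fun z : α × β => z.1 ∉ S ∧ z.2 ∈ T ∧ ¬ E z.1 z.2)).card ≤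
        (Sᶜ ×ˢ T).card := by
      rw [← Finset.card_union_of_disjoint]
      · apply Finset.card_le_card
        intro z hz
        rcases Finset.mem_union.1 hz with h | h
        · have h := (Finset.mem_filter.1 h).2
          exact Finset.mem_product.2 ⟨Finset.mem_compl.2 h.1, h.2.1⟩
        · have h := (Finset.mem_filter.1 h).2
          exact Finset.mem_product.2 ⟨Finset.mem_compl.2 h.1, h.2.1⟩
      · rw [Finset.disjoint_left]
        intro z h h'
        exact (Finset.mem_filter.1 h').2.2.2 (Finset.mem_filter.1 h).2.2.2
    have h2 := Finset.card_compl_add_card S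
    have h2r : ((Sᶜ).card : ℝ) = n - S.card := by
      rw [hα] at h2
      have : ((Sᶜ).card : ℝ) + S.card = n := by exact_mod_cast h2
      linarith
    rw [Finset.card_product] at h1
    have h1 := (Nat.cast_le (α := ℝ)).2 h1
    rw [Nat.cast_add, Nat.cast_mul, h2r] at h1
    rw [hY, hZ]; exact h1
  have hXe : X ≤ ε * n ^ 2 := by rw [hX]; exact he
  have hZ0 : 0 ≤ Z := by rw [hZ]; positivity
  have hZe : Z ≤ ε * n ^ 2 := by nlinarith
  refine ⟨?_, by rw [← hZ]; exact hZe, ?_, ?_⟩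
  · by_contra hcon
    push Not at hcon
    have h1 : (S.card - (n:ℝ) / 2) * T.card ≤ ε * n ^ 2 := by linarith
    have h2 : (2 * ε * n) * (n / 2) < (S.card - (n:ℝ) / 2) * T.card := by
      have hc : 2 * ε * n < S.card - (n:ℝ) / 2 := by linarith
      have : (S.card - (n:ℝ) / 2) * (n / 2) ≤ (S.card - (n:ℝ) / 2) * T.card := by
        apply mul_le_mul_of_nonneg_left hT; linarith
      have : 2 * ε * n * (n / 2) < (S.card - (n:ℝ) / 2) * (n / 2) := by
        apply mul_lt_mul_of_pos_right hc; linarith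
      linarith
    nlinarith
  · have h1 := cf_mark_left (fun a b => a ∈ S ∧ b ∈ T ∧ E a b) (Finset.univ.filter (fun a => a ∈ S ∧
      (n:ℝ) / 4 ≤ ((Finset.univ.filter (fun b => b ∈ T ∧ E a b)).card : ℝ))) ((n:ℝ) / 4) (by
      intro a ha
      have ha := (Finset.mem_filter.1 ha).2
      refine ha.2.trans ((Nat.cast_le (α := ℝ)).2 (Finset.card_le_card ?_))
      intro b hb
      exact Finset.mem_filter.2 ⟨Finset.mem_univ _, ha.1, (Finset.mem_filter.1 hb).2⟩)
    have h2 := h1.trans he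
    refine le_of_mul_le_mul_right (h2.trans ?_) (by positivity : (0:ℝ) < n / 4)
    apply le_of_eq; ring
  · have h1 := cf_mark_left (fun a b => a ∉ S ∧ b ∈ T ∧ ¬ E a b)
      (Finset.univ.filter (fun a => a ∉ S ∧
      ((Finset.univ.filter (fun b => b ∈ T ∧ E a b)).card : ℝ) < n / 4)) ((n:ℝ) / 4) (by
      intro a ha
      have ha := (Finset.mem_filter.1 ha).2
      have := cf_cover2 T (Finset.univ.filter (fun b => b ∈ T ∧ E a b))
        (Finset.univ.filter (fun b => a ∉ S ∧ b ∈ T ∧ ¬ E a b)) (by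
        intro b hb
        by_cases h : E a b
        · exact Or.inl (Finset.mem_filter.2 ⟨Finset.mem_univ _, hb, h⟩)
        · exact Or.inr (Finset.mem_filter.2 ⟨Finset.mem_univ _, ha.1, hb, h⟩))
      have := ha.2
      linarith)
    rw [hZ] at hZe
    have h2 := h1.trans hZe
    refine le_of_mul_le_mul_right (h2.trans ?_) (by positivity : (0:ℝ) < n / 4)
    apply le_of_eq; ring

open Classical in
theorem cf_ext {α β : Type*} [Fintype α] [Fintype β] (E : α → β → Prop)
    (n : ℕ) (hn0 : 0 < n) (hα : Fintype.card α = n) (hβ : Fintype.card β = n) (ε : ℝ)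
    (hε0 : 0 < ε) (hε : ε ≤ 1 / 1000)
    (hda : ∀ a, (n:ℝ) / 2 ≤ ((Finset.univ.filter (fun b => E a b)).card : ℝ))
    (hdb : ∀ b, (n:ℝ) / 2 ≤ ((Finset.univ.filter (fun a => E a b)).card : ℝ))
    (S : Finset α) (T : Finset β) (hS : (n:ℝ) / 2 ≤ S.card) (hT : (n:ℝ) / 2 ≤ T.card)
    (he : ((Finset.univ.filter (fun z : α × β => z.1 ∈ S ∧ z.2 ∈ T ∧ E z.1 z.2)).card : ℝ)
      ≤ ε * n ^ 2) :
    ∃ (A1 : Finset α) (B1 : Finset β),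
      (n:ℝ) / 3 ≤ A1.card ∧ (n:ℝ) / 3 ≤ (A1ᶜ).card ∧ (n:ℝ) / 3 ≤ B1.card ∧
      (n:ℝ) / 3 ≤ (B1ᶜ).card ∧
      (A1.card : ℝ) - B1.card ≤ 20 * ε * n ∧ (B1.card : ℝ) - A1.card ≤ 20 * ε * n ∧
      (∀ a, (n:ℝ) / 8 ≤ ((Finset.univ.filter (fun b => (a ∈ A1 ↔ b ∈ B1) ∧ E a b)).card : ℝ)) ∧
      (∀ b, (n:ℝ) / 8 ≤ ((Finset.univ.filter (fun a => (a ∈ A1 ↔ b ∈ B1) ∧ E a b)).card : ℝ)) ∧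
      ((Finset.univ.filter (fun z : α × β => (z.1 ∈ A1 ↔ z.2 ∈ B1) ∧ ¬ E z.1 z.2)).card : ℝ)
      ≤ 18 * ε * n ^ 2 := by
  have hnr : (0:ℝ) < n := by exact_mod_cast hn0
  have hεn : 0 < ε * n := by positivity
  have hεn1 : ε * n ≤ n / 1000 := by nlinarith
  obtain ⟨s1, s2, s3, s4⟩ := cf_ext_side E n hn0 hα ε hdb S T hS hT he
  have he' : ((Finset.univ.filter (fun z : β × α => z.1 ∈ T ∧ z.2 ∈ S ∧ E z.2 z.1)).card : ℝ)
      ≤ ε * n ^ 2 := by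
    refine le_trans ((Nat.cast_le (α := ℝ)).2 ?_) he
    apply Finset.card_le_card_of_injOn Prod.swap
    · intro z hz
      have hz := (Finset.mem_filter.1 (Finset.mem_coe.1 hz)).2
      exact Finset.mem_coe.2 (Finset.mem_filter.2 ⟨Finset.mem_univ _, hz.2.1, hz.1, hz.2.2⟩)
    · exact Prod.swap_injective.injOn
  obtain ⟨t1, t2, t3, t4⟩ := cf_ext_side (fun b a => E a b) n hn0 hβ ε hda T S hT hS he'
  have t2' : ((Finset.univ.filter (fun z : α × β => z.1 ∈ S ∧ z.2 ∉ T ∧ ¬ E z.1 z.2)).card : ℝ)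
      ≤ ε * n ^ 2 := by
    refine le_trans ((Nat.cast_le (α := ℝ)).2 ?_) t2
    apply Finset.card_le_card_of_injOn Prod.swap
    · intro z hz
      have hz := (Finset.mem_filter.1 (Finset.mem_coe.1 hz)).2
      exact Finset.mem_coe.2 (Finset.mem_filter.2 ⟨Finset.mem_univ _, hz.2.1, hz.1, hz.2.2⟩)
    · exact Prod.swap_injective.injOn
  obtain ⟨A1, hA1⟩ : ∃ A1 : Finset α, ∀ a, a ∈ A1 ↔
      ((Finset.univ.filter (fun b => b ∈ T ∧ E a b)).card : ℝ) < n / 4 :=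
    ⟨Finset.univ.filter (fun a => ((Finset.univ.filter (fun b => b ∈ T ∧ E a b)).card : ℝ) < n / 4),
      fun a => by rw [Finset.mem_filter]; exact and_iff_right (Finset.mem_univ _)⟩
  obtain ⟨B1, hB1⟩ : ∃ B1 : Finset β, ∀ b, b ∈ B1 ↔
      (n:ℝ) / 4 ≤ ((Finset.univ.filter (fun a => a ∈ S ∧ E a b)).card : ℝ) :=
    ⟨Finset.univ.filter (fun b => (n:ℝ) / 4 ≤
      ((Finset.univ.filter (fun a => a ∈ S ∧ E a b)).card : ℝ)),
      fun b => by rw [Finset.mem_filter]; exact and_iff_right (Finset.mem_univ _)⟩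
  -- symmetric differences
  obtain ⟨DA, hDA⟩ : ∃ DA : Finset α, ∀ a, a ∈ DA ↔ ¬ (a ∈ A1 ↔ a ∈ S) :=
    ⟨Finset.univ.filter (fun a => ¬ (a ∈ A1 ↔ a ∈ S)),
      fun a => by rw [Finset.mem_filter]; exact and_iff_right (Finset.mem_univ _)⟩
  obtain ⟨DB, hDB⟩ : ∃ DB : Finset β, ∀ b, b ∈ DB ↔ ¬ (b ∈ B1 ↔ b ∉ T) :=
    ⟨Finset.univ.filter (fun b => ¬ (b ∈ B1 ↔ b ∉ T)),
      fun b => by rw [Finset.mem_filter]; exact and_iff_right (Finset.mem_univ _)⟩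
  have hDAc : (DA.card : ℝ) ≤ 8 * ε * n := by
    refine (cf_cover2 DA _ _ ?_).trans ((add_le_add s3 s4).trans (le_of_eq (by ring)))
    intro a ha
    rw [hDA] at ha
    by_cases h : a ∈ S
    · refine Or.inl (Finset.mem_filter.2 ⟨Finset.mem_univ _, h, ?_⟩)
      by_contra hc
      exact ha ⟨fun _ => h, fun _ => (hA1 a).2 (not_le.1 hc)⟩
    · refine Or.inr (Finset.mem_filter.2 ⟨Finset.mem_univ _, h, ?_⟩)
      by_contra hc
      exact ha ⟨fun h' => absurd ((hA1 a).1 h') hc, fun h' => absurd h' h⟩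
  have hDBc : (DB.card : ℝ) ≤ 8 * ε * n := by
    refine (cf_cover2 DB _ _ ?_).trans ((add_le_add t3 t4).trans (le_of_eq (by ring)))
    intro b hb
    rw [hDB] at hb
    by_cases h : b ∈ T
    · refine Or.inl (Finset.mem_filter.2 ⟨Finset.mem_univ _, h, ?_⟩)
      by_contra hc
      exact hb ⟨fun h' => absurd ((hB1 b).1 h') hc, fun h' => absurd h h'⟩
    · refine Or.inr (Finset.mem_filter.2 ⟨Finset.mem_univ _, h, ?_⟩)
      by_contra hc
      exact hb ⟨fun _ => h, fun _ => (hB1 b).2 (not_lt.1 hc)⟩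
  have cA : (A1.card : ℝ) ≤ S.card + DA.card := cf_cover2 _ _ _ (fun a ha => by
    by_cases h : a ∈ S
    · exact Or.inl h
    · exact Or.inr ((hDA a).2 fun h' => h (h'.1 ha)))
  have cA' : (S.card : ℝ) ≤ A1.card + DA.card := cf_cover2 _ _ _ (fun a ha => by
    by_cases h : a ∈ A1
    · exact Or.inl h
    · exact Or.inr ((hDA a).2 fun h' => h (h'.2 ha)))
  have cB : (B1.card : ℝ) ≤ (Tᶜ).card + DB.card := cf_cover2 _ _ _ (fun b hb => by
    by_cases h : b ∈ T
    · exact Or.inr ((hDB b).2 fun h' => h'.1 hb h)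
    · exact Or.inl (Finset.mem_compl.2 h))
  have cB' : ((Tᶜ).card : ℝ) ≤ B1.card + DB.card := cf_cover2 _ _ _ (fun b hb => by
    by_cases h : b ∈ B1
    · exact Or.inl h
    · exact Or.inr ((hDB b).2 fun h' => h (h'.2 (Finset.mem_compl.1 hb))))
  have kT : ((Tᶜ).card : ℝ) + T.card = n := by
    have h2 := Finset.card_compl_add_card T
    rw [hβ] at h2; exact_mod_cast h2
  have kA : ((A1ᶜ).card : ℝ) + A1.card = n := by
    have h2 := Finset.card_compl_add_card A1
    rw [hα] at h2; exact_mod_cast h2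
  have kB : ((B1ᶜ).card : ℝ) + B1.card = n := by
    have h2 := Finset.card_compl_add_card B1
    rw [hβ] at h2; exact_mod_cast h2
  refine ⟨A1, B1, by linarith, by linarith, by linarith, by linarith, by linarith, by linarith,
    ?_, ?_, ?_⟩
  · intro a
    have key : (n:ℝ) / 4 ≤ ((Finset.univ.filter (fun b => (a ∈ A1 ↔ b ∉ T) ∧ E a b)).card : ℝ) := by
      by_cases h : a ∈ A1
      · have h1 := (hA1 a).1 h
        have := cf_cover2 (Finset.univ.filter (fun b => E a b))
          (Finset.univ.filter (fun b => b ∈ T ∧ E a b))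
          (Finset.univ.filter (fun b => (a ∈ A1 ↔ b ∉ T) ∧ E a b)) (by
          intro b hb
          have hb := (Finset.mem_filter.1 hb).2
          by_cases h' : b ∈ T
          · exact Or.inl (Finset.mem_filter.2 ⟨Finset.mem_univ _, h', hb⟩)
          · exact Or.inr (Finset.mem_filter.2 ⟨Finset.mem_univ _, ⟨fun _ => h', fun _ => h⟩, hb⟩))
        have := hda a
        linarith
      · have h1 := not_lt.1 (fun h' => h ((hA1 a).2 h'))
        refine h1.trans ((Nat.cast_le (α := ℝ)).2 (Finset.card_le_card ?_))
        intro b hb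
        have hb := (Finset.mem_filter.1 hb).2
        exact Finset.mem_filter.2 ⟨Finset.mem_univ _,
          ⟨fun h' => absurd h' h, fun h' => absurd hb.1 h'⟩, hb.2⟩
    have := cf_cover2 (Finset.univ.filter (fun b => (a ∈ A1 ↔ b ∉ T) ∧ E a b))
      (Finset.univ.filter (fun b => (a ∈ A1 ↔ b ∈ B1) ∧ E a b)) DB (by
      intro b hb
      have hb := (Finset.mem_filter.1 hb).2
      by_cases h' : (b ∈ B1 ↔ b ∉ T)
      · exact Or.inl (Finset.mem_filter.2 ⟨Finset.mem_univ _, hb.1.trans h'.symm, hb.2⟩)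
      · exact Or.inr ((hDB b).2 h'))
    linarith
  · intro b
    have key : (n:ℝ) / 4 ≤ ((Finset.univ.filter (fun a => (a ∈ S ↔ b ∈ B1) ∧ E a b)).card : ℝ) := by
      by_cases h : b ∈ B1
      · have h1 := (hB1 b).1 h
        refine h1.trans ((Nat.cast_le (α := ℝ)).2 (Finset.card_le_card ?_))
        intro a ha
        have ha := (Finset.mem_filter.1 ha).2
        exact Finset.mem_filter.2 ⟨Finset.mem_univ _, ⟨fun _ => h, fun _ => ha.1⟩, ha.2⟩
      · have h1 := not_le.1 (fun h' => h ((hB1 b).2 h'))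
        have := cf_cover2 (Finset.univ.filter (fun a => E a b))
          (Finset.univ.filter (fun a => a ∈ S ∧ E a b))
          (Finset.univ.filter (fun a => (a ∈ S ↔ b ∈ B1) ∧ E a b)) (by
          intro a ha
          have ha := (Finset.mem_filter.1 ha).2
          by_cases h' : a ∈ S
          · exact Or.inl (Finset.mem_filter.2 ⟨Finset.mem_univ _, h', ha⟩)
          · exact Or.inr (Finset.mem_filter.2 ⟨Finset.mem_univ _,
              ⟨fun h2 => absurd h2 h', fun h2 => absurd h2 h⟩, ha⟩))
        have := hdb b
        linarith
    have := cf_cover2 (Finset.univ.filter (fun a => (a ∈ S ↔ b ∈ B1) ∧ E a b))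
      (Finset.univ.filter (fun a => (a ∈ A1 ↔ b ∈ B1) ∧ E a b)) DA (by
      intro a ha
      have ha := (Finset.mem_filter.1 ha).2
      by_cases h' : (a ∈ A1 ↔ a ∈ S)
      · exact Or.inl (Finset.mem_filter.2 ⟨Finset.mem_univ _, h'.trans ha.1, ha.2⟩)
      · exact Or.inr ((hDA a).2 h'))
    linarith
  · have h1 := cf_cover3 (Finset.univ.filter (fun z : α × β => (z.1 ∈ A1 ↔ z.2 ∈ B1) ∧ ¬ E z.1 z.2))
      (Finset.univ.filter (fun z : α × β => (z.1 ∈ S ↔ z.2 ∉ T) ∧ ¬ E z.1 z.2))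
      (DA ×ˢ Finset.univ) (Finset.univ ×ˢ DB) (by
      intro z hz
      have hz := (Finset.mem_filter.1 hz).2
      by_cases h' : (z.1 ∈ A1 ↔ z.1 ∈ S)
      · by_cases h2 : (z.2 ∈ B1 ↔ z.2 ∉ T)
        · exact Or.inl (Finset.mem_filter.2 ⟨Finset.mem_univ _,
            (h'.symm.trans hz.1).trans h2, hz.2⟩)
        · exact Or.inr (Or.inr (Finset.mem_product.2 ⟨Finset.mem_univ _, (hDB _).2 h2⟩))
      · exact Or.inr (Or.inl (Finset.mem_product.2 ⟨(hDA _).2 h', Finset.mem_univ _⟩)))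
    have h2 := cf_cover2 (Finset.univ.filter (fun z : α × β => (z.1 ∈ S ↔ z.2 ∉ T) ∧ ¬ E z.1 z.2))
      (Finset.univ.filter (fun z : α × β => z.1 ∉ S ∧ z.2 ∈ T ∧ ¬ E z.1 z.2))
      (Finset.univ.filter (fun z : α × β => z.1 ∈ S ∧ z.2 ∉ T ∧ ¬ E z.1 z.2)) (by
      intro z hz
      have hz := (Finset.mem_filter.1 hz).2
      by_cases h' : z.1 ∈ S
      · exact Or.inr (Finset.mem_filter.2 ⟨Finset.mem_univ _, h', hz.1.1 h', hz.2⟩)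
      · refine Or.inl (Finset.mem_filter.2 ⟨Finset.mem_univ _, h', ?_, hz.2⟩)
        by_contra h2
        exact h' (hz.1.2 h2))
    rw [Finset.card_product, Finset.card_product, Finset.card_univ, Finset.card_univ, hα, hβ,
      Nat.cast_mul, Nat.cast_mul] at h1
    have h3 : (DA.card : ℝ) * n ≤ 8 * ε * n * n := mul_le_mul_of_nonneg_right hDAc hnr.le
    have h4 : (n : ℝ) * DB.card ≤ n * (8 * ε * n) := mul_le_mul_of_nonneg_left hDBc hnr.le
    nlinarith

end Ext
section Hub

theorem cf_pick {α β : Type*} (U : Finset α) (W : Finset β) (d : ℕ) :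
    ∃ X ⊆ U, ∃ Y ⊆ W, X.card + Y.card ≤ d ∧ (d - X.card - Y.card ≠ 0 → X = U ∧ Y = W) := by
  obtain ⟨X, hX, hXc⟩ := Finset.exists_subset_card_eq (min_le_right d U.card)
  obtain ⟨Y, hY, hYc⟩ := Finset.exists_subset_card_eq (min_le_right (d - X.card) W.card)
  refine ⟨X, hX, Y, hY, by omega, fun h => ⟨?_, ?_⟩⟩
  · exact Finset.eq_of_subset_of_card_le hX (by omega)
  · exact Finset.eq_of_subset_of_card_le hY (by omega)

open Classical in
theorem cf_hub {α β : Type*} [Fintype α] [Fintype β] (E : α → β → Prop)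
    (Fr : α × β → α × β → Prop) (n : ℕ) (hα : Fintype.card α = n) (hβ : Fintype.card β = n)
    (μ ε : ℝ) (hμe : μ = 1 / 10 ^ 20) (hεe : ε = 1 / 10 ^ 8) (hn : 10 ^ 20 ≤ n)
    (hsym : ∀ e f, Fr e f → Fr f e)
    (hbd : ∀ e, ((Finset.univ.filter (fun f => Fr e f)).card : ℝ) ≤ μ * n)
    (hda : ∀ a, (n:ℝ) / 2 ≤ ((Finset.univ.filter (fun b => E a b)).card : ℝ))
    (hdb : ∀ b, (n:ℝ) / 2 ≤ ((Finset.univ.filter (fun a => E a b)).card : ℝ))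
    (A1 : Finset α) (B1 : Finset β) (d : ℕ) (hcard : A1.card = B1.card + d)
    (hA1 : (n:ℝ) / 3 ≤ A1.card) (hB2 : (n:ℝ) / 3 ≤ (B1ᶜ).card)
    (hd : (d:ℝ) ≤ 20 * ε * n)
    (hoa : ∀ a, (n:ℝ) / 8 ≤ ((Finset.univ.filter (fun b => (a ∈ A1 ↔ b ∈ B1) ∧ E a b)).card : ℝ))
    (hob : ∀ b, (n:ℝ) / 8 ≤ ((Finset.univ.filter (fun a => (a ∈ A1 ↔ b ∈ B1) ∧ E a b)).card : ℝ))
    (hne : ((Finset.univ.filter (fun z : α × β => (z.1 ∈ A1 ↔ z.2 ∈ B1) ∧ ¬ E z.1 z.2)).card : ℝ)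
      ≤ 18 * ε * n ^ 2) :
    ∃ σ : α ≃ β, (∀ a, E a (σ a)) ∧ ∀ a a', a ≠ a' → ¬ Fr (a, σ a) (a', σ a') := by
  have hnr : (10 ^ 20 : ℝ) ≤ n := by exact_mod_cast hn
  have hn0 : (0:ℝ) < n := by linarith [show (0:ℝ) < 10 ^ 20 by positivity]
  obtain ⟨HA, hHA⟩ : ∃ HA : Finset α, ∀ a, a ∈ HA ↔ a ∈ A1 ∧
      1 / 400 * (n:ℝ) ≤ ((Finset.univ.filter (fun b => b ∉ B1 ∧ E a b)).card : ℝ) :=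
    ⟨Finset.univ.filter (fun a => a ∈ A1 ∧
      1 / 400 * (n:ℝ) ≤ ((Finset.univ.filter (fun b => b ∉ B1 ∧ E a b)).card : ℝ)),
      fun a => by rw [Finset.mem_filter]; exact and_iff_right (Finset.mem_univ _)⟩
  obtain ⟨HB, hHB⟩ : ∃ HB : Finset β, ∀ b, b ∈ HB ↔ b ∉ B1 ∧
      1 / 400 * (n:ℝ) ≤ ((Finset.univ.filter (fun a => a ∈ A1 ∧ E a b)).card : ℝ) :=
    ⟨Finset.univ.filter (fun b => b ∉ B1 ∧
      1 / 400 * (n:ℝ) ≤ ((Finset.univ.filter (fun a => a ∈ A1 ∧ E a b)).card : ℝ)),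
      fun b => by rw [Finset.mem_filter]; exact and_iff_right (Finset.mem_univ _)⟩
  obtain ⟨X, hX, Y, hY, hXY, hall⟩ := cf_pick HA HB d
  have hXA : X ⊆ A1 := fun a ha => ((hHA a).1 (hX ha)).1
  have hYB : ∀ b ∈ Y, b ∉ B1 := fun b hb => ((hHB b).1 (hY hb)).1
  obtain ⟨A1', hA1'⟩ : ∃ A1' : Finset α, A1' = A1 \ X := ⟨_, rfl⟩
  obtain ⟨B1', hB1'⟩ : ∃ B1' : Finset β, B1' = B1 ∪ Y := ⟨_, rfl⟩
  have memA : ∀ a, a ∈ A1' ↔ a ∈ A1 ∧ a ∉ X := fun a => by rw [hA1', Finset.mem_sdiff]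
  have memB : ∀ b, b ∈ B1' ↔ b ∈ B1 ∨ b ∈ Y := fun b => by rw [hB1', Finset.mem_union]
  have cA : A1'.card + X.card = A1.card := by
    rw [hA1']; exact Finset.card_sdiff_add_card_eq_card hXA
  have cB : B1'.card = B1.card + Y.card := by
    rw [hB1']
    apply Finset.card_union_of_disjoint
    rw [Finset.disjoint_left]
    exact fun b h1 h2 => hYB b h2 h1
  have cAr : (A1'.card : ℝ) + X.card = A1.card := by exact_mod_cast cA
  have cBr : (B1'.card : ℝ) = B1.card + Y.card := by exact_mod_cast cB
  have cXY : (X.card : ℝ) + Y.card ≤ 20 * ε * n := le_trans (by exact_mod_cast hXY) hd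
  have kB : ((B1ᶜ).card : ℝ) + B1.card = n := by
    have h2 := Finset.card_compl_add_card B1
    rw [hβ] at h2; exact_mod_cast h2
  have kB' : ((B1'ᶜ).card : ℝ) + B1'.card = n := by
    have h2 := Finset.card_compl_add_card B1'
    rw [hβ] at h2; exact_mod_cast h2
  have x0 : (0:ℝ) ≤ X.card := by positivity
  have y0 : (0:ℝ) ≤ Y.card := by positivity
  have hεn : 20 * ε * n = n / 5000000 := by rw [hεe]; ring
  rw [hεn] at cXY
  refine cf_core E Fr n hα hβ μ (1 / 1000) (38 * ε) (1 / 400) hsym hbd hda hdb A1' B1'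
    (d - X.card - Y.card) (by omega) (by linarith) (by linarith) ?_ ?_ ?_ ?_ ?_ ?_ (by norm_num)
    (by norm_num) (by rw [hμe]; positivity) (by rw [hμe, hεe]; norm_num) (by rw [hμe]; norm_num)
    (le_trans (by norm_num) hnr) (by rw [hμe]; linarith) (le_trans (by norm_num) hn)
    (by rw [hμe]; norm_num)
  · intro a
    by_cases ha : a ∈ X
    · have h1 := ((hHA a).1 (hX ha)).2
      have := cf_cover2 (Finset.univ.filter (fun b => b ∉ B1 ∧ E a b))
        (Finset.univ.filter (fun b => (a ∈ A1' ↔ b ∈ B1') ∧ E a b)) Y (by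
        intro b hb
        have hb := (Finset.mem_filter.1 hb).2
        by_cases h' : b ∈ Y
        · exact Or.inr h'
        · refine Or.inl (Finset.mem_filter.2 ⟨Finset.mem_univ _, ?_, hb.2⟩)
          rw [memA, memB]
          exact ⟨fun h2 => absurd ha h2.2, fun h2 => (h2.elim hb.1 h').elim⟩)
      linarith
    · have h1 := hoa a
      have := cf_cover2 (Finset.univ.filter (fun b => (a ∈ A1 ↔ b ∈ B1) ∧ E a b))
        (Finset.univ.filter (fun b => (a ∈ A1' ↔ b ∈ B1') ∧ E a b)) Y (by
        intro b hb
        have hb := (Finset.mem_filter.1 hb).2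
        by_cases h' : b ∈ Y
        · exact Or.inr h'
        · refine Or.inl (Finset.mem_filter.2 ⟨Finset.mem_univ _, ?_, hb.2⟩)
          rw [memA, memB]
          exact ⟨fun h2 => Or.inl (hb.1.1 h2.1), fun h2 => ⟨hb.1.2 (h2.resolve_right h'), ha⟩⟩)
      linarith
  · intro b
    by_cases hb : b ∈ Y
    · have h1 := ((hHB b).1 (hY hb)).2
      have := cf_cover2 (Finset.univ.filter (fun a => a ∈ A1 ∧ E a b))
        (Finset.univ.filter (fun a => (a ∈ A1' ↔ b ∈ B1') ∧ E a b)) X (by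
        intro a ha
        have ha := (Finset.mem_filter.1 ha).2
        by_cases h' : a ∈ X
        · exact Or.inr h'
        · refine Or.inl (Finset.mem_filter.2 ⟨Finset.mem_univ _, ?_, ha.2⟩)
          rw [memA, memB]
          exact ⟨fun _ => Or.inr hb, fun _ => ⟨ha.1, h'⟩⟩)
      linarith
    · have h1 := hob b
      have := cf_cover2 (Finset.univ.filter (fun a => (a ∈ A1 ↔ b ∈ B1) ∧ E a b))
        (Finset.univ.filter (fun a => (a ∈ A1' ↔ b ∈ B1') ∧ E a b)) X (by
        intro a ha
        have ha := (Finset.mem_filter.1 ha).2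
        by_cases h' : a ∈ X
        · exact Or.inr h'
        · refine Or.inl (Finset.mem_filter.2 ⟨Finset.mem_univ _, ?_, ha.2⟩)
          rw [memA, memB]
          exact ⟨fun h2 => Or.inl (ha.1.1 h2.1), fun h2 => ⟨ha.1.2 (h2.resolve_right hb), h'⟩⟩)
      linarith
  · have h1 := cf_cover3
      (Finset.univ.filter (fun z : α × β => (z.1 ∈ A1' ↔ z.2 ∈ B1') ∧ ¬ E z.1 z.2))
      (Finset.univ.filter (fun z : α × β => (z.1 ∈ A1 ↔ z.2 ∈ B1) ∧ ¬ E z.1 z.2))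
      (X ×ˢ Finset.univ) (Finset.univ ×ˢ Y) (by
      intro z hz
      have hz := (Finset.mem_filter.1 hz).2
      rw [memA, memB] at hz
      by_cases h' : z.1 ∈ X
      · exact Or.inr (Or.inl (Finset.mem_product.2 ⟨h', Finset.mem_univ _⟩))
      · by_cases h2 : z.2 ∈ Y
        · exact Or.inr (Or.inr (Finset.mem_product.2 ⟨Finset.mem_univ _, h2⟩))
        · exact Or.inl (Finset.mem_filter.2 ⟨Finset.mem_univ _,
            ⟨fun h => (hz.1.1 ⟨h, h'⟩).resolve_right h2, fun h => (hz.1.2 (Or.inl h)).1⟩, hz.2⟩))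
    rw [Finset.card_product, Finset.card_product, Finset.card_univ, Finset.card_univ, hα, hβ,
      Nat.cast_mul, Nat.cast_mul] at h1
    have h2 : ((X.card : ℝ) + Y.card) * n ≤ (20 * ε * n) * n := by
      rw [hεn]; exact mul_le_mul_of_nonneg_right cXY hn0.le
    nlinarith
  · intro hd0 a ha
    have ha := (memA a).1 ha
    rw [(hall hd0).1, hHA] at ha
    have h1 := not_le.1 (fun h => ha.2 ⟨ha.1, h⟩)
    refine le_trans ((Nat.cast_le (α := ℝ)).2 (Finset.card_le_card ?_)) h1.le
    intro b hb
    have hb := (Finset.mem_filter.1 hb).2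
    exact Finset.mem_filter.2 ⟨Finset.mem_univ _, fun h => hb.1 ((memB b).2 (Or.inl h)), hb.2⟩
  · intro hd0 b hb
    have hb1 : b ∉ B1 := fun h => hb ((memB b).2 (Or.inl h))
    have hb2 : b ∉ HB := by
      rw [← (hall hd0).2]; exact fun h => hb ((memB b).2 (Or.inr h))
    rw [hHB] at hb2
    have h1 := not_le.1 (fun h => hb2 ⟨hb1, h⟩)
    refine le_trans ((Nat.cast_le (α := ℝ)).2 (Finset.card_le_card ?_)) h1.le
    intro a ha
    have ha := (Finset.mem_filter.1 ha).2
    exact Finset.mem_filter.2 ⟨Finset.mem_univ _, ((memA a).1 ha.1).1, ha.2⟩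
  · have h1 : ((d - X.card - Y.card : ℕ) : ℝ) ≤ d := by
      refine (Nat.cast_le (α := ℝ)).2 (by omega)
    rw [hεn] at hd
    rw [hμe]
    linarith

open Classical in
theorem cf_dirac {α β : Type*} [Fintype α] [Fintype β] (E : α → β → Prop)
    (Fr : α × β → α × β → Prop) (n : ℕ) (hα : Fintype.card α = n) (hβ : Fintype.card β = n)
    (μ : ℝ) (hμe : μ = 1 / 10 ^ 20) (hn : 10 ^ 20 ≤ n)
    (hsym : ∀ e f, Fr e f → Fr f e)
    (hbd : ∀ e, ((Finset.univ.filter (fun f => Fr e f)).card : ℝ) ≤ μ * n)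
    (hda : ∀ a, (n:ℝ) / 2 ≤ ((Finset.univ.filter (fun b => E a b)).card : ℝ))
    (hdb : ∀ b, (n:ℝ) / 2 ≤ ((Finset.univ.filter (fun a => E a b)).card : ℝ)) :
    ∃ σ : α ≃ β, (∀ a, E a (σ a)) ∧ ∀ a a', a ≠ a' → ¬ Fr (a, σ a) (a', σ a') := by
  have hnr : (10 ^ 20 : ℝ) ≤ n := by exact_mod_cast hn
  obtain ⟨ε, hεe⟩ : ∃ ε : ℝ, ε = 1 / 10 ^ 8 := ⟨_, rfl⟩
  by_cases hx : ∀ (S : Finset α) (T : Finset β), (n:ℝ) / 2 ≤ S.card → (n:ℝ) / 2 ≤ T.card →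
      ε * n ^ 2 ≤ (((S ×ˢ T).filter (fun z => E z.1 z.2)).card : ℝ)
  · exact cf_nonext E Fr n hα hβ μ ε hsym hbd hda hdb hx (by rw [hεe]; positivity)
      (by rw [hεe]; norm_num) (by rw [hμe]; positivity) (by rw [hμe, hεe]; norm_num)
      (le_trans (by rw [hεe]; norm_num) hnr)
  push Not at hx
  obtain ⟨S, T, hS, hT, he⟩ := hx
  have he' : ((Finset.univ.filter (fun z : α × β => z.1 ∈ S ∧ z.2 ∈ T ∧ E z.1 z.2)).card : ℝ)
      ≤ ε * n ^ 2 := by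
    refine le_trans ((Nat.cast_le (α := ℝ)).2 (Finset.card_le_card ?_)) he.le
    intro z hz
    have hz := (Finset.mem_filter.1 hz).2
    exact Finset.mem_filter.2 ⟨Finset.mem_product.2 ⟨hz.1, hz.2.1⟩, hz.2.2⟩
  obtain ⟨A1, B1, a1, a2, b1, b2, d1, d2, o1, o2, ne⟩ := cf_ext E n (by omega) hα hβ ε
    (by rw [hεe]; positivity) (by rw [hεe]; norm_num) hda hdb S T hS hT he'
  rcases le_total B1.card A1.card with h | h
  · obtain ⟨d, hd⟩ := Nat.exists_eq_add_of_le h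
    refine cf_hub E Fr n hα hβ μ ε hμe hεe hn hsym hbd hda hdb A1 B1 d hd a1 b2 ?_ o1 o2 ne
    have : (A1.card : ℝ) = B1.card + d := by exact_mod_cast hd
    linarith
  · obtain ⟨d, hd⟩ := Nat.exists_eq_add_of_le h
    have hA := Finset.card_compl_add_card A1
    have hB := Finset.card_compl_add_card B1
    have hiff : ∀ a b, (a ∈ A1ᶜ ↔ b ∈ B1ᶜ) ↔ (a ∈ A1 ↔ b ∈ B1) := fun a b => by
      rw [Finset.mem_compl, Finset.mem_compl, not_iff_not]
    refine cf_hub E Fr n hα hβ μ ε hμe hεe hn hsym hbd hda hdb A1ᶜ B1ᶜ d (by omega) a2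
      (by rw [compl_compl]; exact b1) ?_ ?_ ?_ ?_
    · have : (B1.card : ℝ) = A1.card + d := by exact_mod_cast hd
      linarith
    · intro a
      refine (o1 a).trans ((Nat.cast_le (α := ℝ)).2 (Finset.card_le_card ?_))
      intro b hb
      have hb := (Finset.mem_filter.1 hb).2
      exact Finset.mem_filter.2 ⟨Finset.mem_univ _, (hiff _ _).2 hb.1, hb.2⟩
    · intro b
      refine (o2 b).trans ((Nat.cast_le (α := ℝ)).2 (Finset.card_le_card ?_))
      intro a hb
      have hb := (Finset.mem_filter.1 hb).2
      exact Finset.mem_filter.2 ⟨Finset.mem_univ _, (hiff _ _).2 hb.1, hb.2⟩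
    · refine le_trans ((Nat.cast_le (α := ℝ)).2 (Finset.card_le_card ?_)) ne
      intro z hb
      have hb := (Finset.mem_filter.1 hb).2
      exact Finset.mem_filter.2 ⟨Finset.mem_univ _, (hiff _ _).1 hb.1, hb.2⟩

end Hub

section Translate

open Classical in
theorem cf_translate (μ : ℝ) (hμ : μ ≤ 1 / 10 ^ 20) (n : ℕ) (hn : 10 ^ 20 ≤ n)
    (V : Type) [Fintype V] (G : SimpleGraph V) (A B : Set V)
    (hAB : A ∪ B = Set.univ) (hdis : Disjoint A B) (hA : A.ncard = n) (hB : B.ncard = n)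
    (hbip : ∀ u v : V, G.Adj u v → (u ∈ A ∧ v ∈ B) ∨ (u ∈ B ∧ v ∈ A))
    (hdeg : ∀ v : V, (n : ℝ) / 2 ≤ ((G.neighborSet v).ncard : ℝ))
    (F : Set (Sym2 (Sym2 V)))
    (hF : ∀ p ∈ F, ∀ e ∈ p, e ∈ G.edgeSet)
    (hbd : ∀ e ∈ G.edgeSet, (({f : Sym2 V | s(e, f) ∈ F}).ncard : ℝ) ≤ μ * n) :
    ∃ M : G.Subgraph, M.IsPerfectMatching ∧
      ∀ e ∈ M.edgeSet, ∀ f ∈ M.edgeSet, e ≠ f → s(e, f) ∉ F := by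
  have hd : ∀ v, v ∈ A → v ∈ B → False := fun v h1 h2 => Set.disjoint_left.1 hdis h1 h2
  have cA : Fintype.card ↥A = n := by rw [← hA, ← Nat.card_eq_fintype_card]; rfl
  have cB : Fintype.card ↥B = n := by rw [← hB, ← Nat.card_eq_fintype_card]; rfl
  have hinj : ∀ x y : ↥A × ↥B, s((x.1 : V), (x.2 : V)) = s((y.1 : V), (y.2 : V)) → x = y := by
    intro x y h
    rcases Sym2.eq_iff.1 h with h | h
    · exact Prod.ext (Subtype.ext h.1) (Subtype.ext h.2)
    · exact (hd _ x.1.2 (h.1 ▸ y.2.2)).elim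
  have hnn : (0:ℝ) ≤ n := by positivity
  obtain ⟨σ, hσ1, hσ2⟩ := cf_dirac (α := ↥A) (β := ↥B) (fun a b => G.Adj a b)
    (fun e f => s(s((e.1 : V), (e.2 : V)), s((f.1 : V), (f.2 : V))) ∈ F) n cA cB (1 / 10 ^ 20) rfl hn
    (fun e f h => by rw [Sym2.eq_swap]; exact h)
    (by
      intro e
      by_cases he : G.Adj e.1 e.2
      · have h1 := (hbd s((e.1 : V), (e.2 : V)) he).trans (mul_le_mul_of_nonneg_right hμ hnn)
        refine le_trans ((Nat.cast_le (α := ℝ)).2 ?_) h1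
        rw [← Set.ncard_coe_finset]
        apply Set.ncard_le_ncard_of_injOn (fun f : ↥A × ↥B => s((f.1 : V), (f.2 : V)))
        · intro f hf
          exact (Finset.mem_filter.1 (Finset.mem_coe.1 hf)).2
        · exact fun x _ y _ h => hinj x y h
      · rw [Finset.filter_eq_empty_iff.2]
        · simp
        · intro f _ hf
          exact he (hF _ hf _ (Sym2.mem_mk_left _ _)))
    (by
      intro a
      refine (hdeg a).trans ((Nat.cast_le (α := ℝ)).2 ?_)
      rw [← Set.ncard_coe_finset]
      refine le_trans (Set.ncard_le_ncard (t := Set.image Subtype.val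
        ((Finset.univ.filter (fun b : ↥B => G.Adj a b) : Finset ↥B) : Set ↥B)) ?_
        (Set.toFinite _)) (Set.ncard_image_le (Set.toFinite _))
      intro v hv
      have hv : G.Adj a v := hv
      have hvB : v ∈ B := (hbip _ _ hv).elim (fun h => h.2) (fun h => (hd _ a.2 h.1).elim)
      exact ⟨⟨v, hvB⟩, Finset.mem_coe.2 (Finset.mem_filter.2 ⟨Finset.mem_univ _, hv⟩), rfl⟩)
    (by
      intro b
      refine (hdeg b).trans ((Nat.cast_le (α := ℝ)).2 ?_)
      rw [← Set.ncard_coe_finset]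
      refine le_trans (Set.ncard_le_ncard (t := Set.image Subtype.val
        ((Finset.univ.filter (fun a : ↥A => G.Adj a b) : Finset ↥A) : Set ↥A)) ?_
        (Set.toFinite _)) (Set.ncard_image_le (Set.toFinite _))
      intro v hv
      have hv : G.Adj b v := hv
      have hvA : v ∈ A := (hbip _ _ hv).elim (fun h => (hd _ h.1 b.2).elim) (fun h => h.2)
      exact ⟨⟨v, hvA⟩, Finset.mem_coe.2 (Finset.mem_filter.2 ⟨Finset.mem_univ _, hv.symm⟩), rfl⟩)
  obtain ⟨M, hM⟩ : ∃ M : G.Subgraph, ∀ u v, M.Adj u v ↔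
      ∃ a : ↥A, (u = a ∧ v = σ a) ∨ (v = a ∧ u = σ a) :=
    ⟨{ verts := Set.univ
       Adj := fun u v => ∃ a : ↥A, (u = a ∧ v = σ a) ∨ (v = a ∧ u = σ a)
       adj_sub := by
         rintro u v ⟨a, ⟨rfl, rfl⟩ | ⟨rfl, rfl⟩⟩
         · exact hσ1 a
         · exact (hσ1 a).symm
       edge_vert := fun _ => Set.mem_univ _
       symm := ⟨fun u v ⟨a, h⟩ => ⟨a, h.symm⟩⟩ }, fun u v => Iff.rfl⟩
  refine ⟨M, ?_, ?_⟩
  · rw [SimpleGraph.Subgraph.isPerfectMatching_iff]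
    intro v
    have hv : v ∈ A ∪ B := hAB ▸ Set.mem_univ v
    rcases hv with hv | hv
    · refine ⟨σ ⟨v, hv⟩, (hM _ _).2 ⟨⟨v, hv⟩, Or.inl ⟨rfl, rfl⟩⟩, ?_⟩
      intro w hw
      obtain ⟨a, ⟨h1, h2⟩ | ⟨h1, h2⟩⟩ := (hM _ _).1 hw
      · subst h1; exact h2
      · exact (hd _ hv (h2 ▸ (σ a).2)).elim
    · refine ⟨σ.symm ⟨v, hv⟩, (hM _ _).2 ⟨σ.symm ⟨v, hv⟩, Or.inr ⟨rfl, by simp⟩⟩, ?_⟩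
      intro w hw
      obtain ⟨a, ⟨h1, h2⟩ | ⟨h1, h2⟩⟩ := (hM _ _).1 hw
      · exact (hd _ (h1 ▸ a.2) hv).elim
      · subst h2; rw [h1]; simp
  · have key : ∀ e ∈ M.edgeSet, ∃ a : ↥A, e = s((a : V), (σ a : V)) := by
      intro e he
      induction e using Sym2.ind with
      | _ u v =>
        obtain ⟨a, ⟨h1, h2⟩ | ⟨h1, h2⟩⟩ := (hM _ _).1 (SimpleGraph.Subgraph.mem_edgeSet.1 he)
        · exact ⟨a, by rw [h1, h2]⟩
        · exact ⟨a, by rw [h1, h2, Sym2.eq_swap]⟩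
    intro e he f hf hef hmem
    obtain ⟨a, rfl⟩ := key e he
    obtain ⟨a', rfl⟩ := key f hf
    exact hσ2 a a' (fun h => hef (by rw [h])) hmem

end Translate

/-- a bipartite robust (ν,τ)-expander on 2n vertices with minimum degree at
least n/2 contains an F-conflict-free perfect matching for every μn-bounded system of
conflicts F for its edges. -/
theorem conflict_free_PM_in_robust_expander :
    ∀ τ : ℝ, τ ∈ Set.Ioo (0 : ℝ) 1 →
    ∃ ν₀ ∈ Set.Ioo (0 : ℝ) 1, ∀ ν ∈ Set.Ioc (0 : ℝ) ν₀,
    ∃ μ₀ : ℝ, 0 < μ₀ ∧ ∀ μ ∈ Set.Ioc (0 : ℝ) μ₀,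
    ∃ n₀ : ℕ, ∀ n : ℕ, n₀ ≤ n →
      ∀ (V : Type) [Fintype V] (G : SimpleGraph V) (A B : Set V),
        A ∪ B = Set.univ → Disjoint A B → A.ncard = n → B.ncard = n →
        (∀ u v : V, G.Adj u v → (u ∈ A ∧ v ∈ B) ∨ (u ∈ B ∧ v ∈ A)) →
        (∀ v : V, (n : ℝ) / 2 ≤ ((G.neighborSet v).ncard : ℝ)) →
        BipRobustExpander G A B n ν τ →
        ∀ F : Set (Sym2 (Sym2 V)),
          (∀ p ∈ F, ∀ e ∈ p, e ∈ G.edgeSet) →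
          (∀ e ∈ G.edgeSet, (({f : Sym2 V | s(e, f) ∈ F}).ncard : ℝ) ≤ μ * n) →
          ∃ M : G.Subgraph, M.IsPerfectMatching ∧
            ∀ e ∈ M.edgeSet, ∀ f ∈ M.edgeSet, e ≠ f → s(e, f) ∉ F := by
  intro τ _
  refine ⟨1 / 2, ⟨by norm_num, by norm_num⟩, fun ν _ => ⟨1 / 10 ^ 20, by positivity, fun μ hμ =>
    ⟨10 ^ 20, ?_⟩⟩⟩
  intro n hn V _ G A B h1 h2 h3 h4 h5 h6 _ F h7 h8
  exact cf_translate μ hμ.2 n hn V G A B h1 h2 h3 h4 h5 h6 F h7 h8
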